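/- There exist constants C > 0 and λ₀ > 0, depending only on α and β, such that for every real Dirichlet quasimode datum (u, λ, f) on the stadium S with λ ≥ λ₀ and ‖u‖_{L²(S)} = 1, one has ‖f‖²_{L²(S)} + λ⁸ ‖u‖²_{L²(W)} ≥ C, where ‖u‖_{L²(W)} is the L² norm of u over the wings W. -/

import Mathlib

open MeasureTheory Real Set Filter

noncomputable section

/-- Partial derivative in the first (x) variable. -/
def pdx (u : ℝ × ℝ → ℝ) (p : ℝ × ℝ) : ℝ := deriv (fun t => u (t, p.2)) p.1

/-- Partial derivative in the second (y) variable. -/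
def pdy (u : ℝ × ℝ → ℝ) (p : ℝ × ℝ) : ℝ := deriv (fun t => u (p.1, t)) p.2

/-- The positive Laplacian `Δu = -u_xx - u_yy`. -/
def lap (u : ℝ × ℝ → ℝ) (p : ℝ × ℝ) : ℝ := -(pdx (pdx u) p) - (pdy (pdy u) p)

/-- The central rectangle `R = [-α,α] × [-β,β]`. -/
def Rect (α β : ℝ) : Set (ℝ × ℝ) := Icc (-α) α ×ˢ Icc (-β) β

/-- The wings `W = W₊ ∪ W₋`, two half-discs of radius β centered at `(±α, 0)`. -/
def Wings (α β : ℝ) : Set (ℝ × ℝ) :=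
  {p | (p.1 - α) ^ 2 + p.2 ^ 2 ≤ β ^ 2 ∧ α ≤ p.1} ∪
  {p | (p.1 + α) ^ 2 + p.2 ^ 2 ≤ β ^ 2 ∧ p.1 ≤ -α}

/-- The Bunimovich stadium `S = R ∪ W`. -/
def Stadium (α β : ℝ) : Set (ℝ × ℝ) := Rect α β ∪ Wings α β

/-- The boundary `∂S`: two horizontal segments and two semicircles. -/
def StadiumBoundary (α β : ℝ) : Set (ℝ × ℝ) :=
  {p | |p.1| ≤ α ∧ (p.2 = β ∨ p.2 = -β)} ∪
  {p | (|p.1| - α) ^ 2 + p.2 ^ 2 = β ^ 2 ∧ α ≤ |p.1|}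

/-- Boundary integral `∫_{∂S} g dl` of an integrand `g` depending on the boundary point
and the outward unit normal at that point. -/
def bdryInt (α β : ℝ) (g : ℝ × ℝ → ℝ × ℝ → ℝ) : ℝ :=
  (∫ x in (-α)..α, (g (x, β) (0, 1) + g (x, -β) (0, -1))) +
  β * ∫ θ in (-(π / 2))..(π / 2),
    (g (α + β * cos θ, β * sin θ) (cos θ, sin θ) +
     g (-(α + β * cos θ), β * sin θ) (-cos θ, sin θ))

/-- Boundary integral `∫_{∂S ∩ W} g dl` over the two semicircles only. -/
def bdryIntW (α β : ℝ) (g : ℝ × ℝ → ℝ × ℝ → ℝ) : ℝ :=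
  β * ∫ θ in (-(π / 2))..(π / 2),
    (g (α + β * cos θ, β * sin θ) (cos θ, sin θ) +
     g (-(α + β * cos θ), β * sin θ) (-cos θ, sin θ))

/-- The normal derivative `∂_N u = n₁ ∂_x u + n₂ ∂_y u` at a boundary point `p`
with outward unit normal `n`. -/
def nderiv (u : ℝ × ℝ → ℝ) (p n : ℝ × ℝ) : ℝ := n.1 * pdx u p + n.2 * pdy u p

/-- A real Dirichlet quasimode datum `(u, λ, f)` on the stadium: `λ > 0`, `u` smooth on a
neighborhood of `S`, `u = 0` on `∂S`, and `(Δ - λ²) u = f` on `S`. -/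
structure QMDatum (α β : ℝ) where
  u : ℝ × ℝ → ℝ
  lam : ℝ
  f : ℝ × ℝ → ℝ
  lam_pos : 0 < lam
  smooth : ∃ V : Set (ℝ × ℝ), IsOpen V ∧ Stadium α β ⊆ V ∧ ContDiffOn ℝ (⊤ : ℕ∞) u V
  dirichlet : ∀ p ∈ StadiumBoundary α β, u p = 0
  eqn : ∀ p ∈ Stadium α β, lap u p - lam ^ 2 * u p = f p

/-!
Let `a(x) ∂ₓ + y m(x) ∂_y` be a vector field on the stadium which is tangent to the boundary and
equals `x ∂ₓ` on the rectangle. Pairing `(Δ - l) u` with the derivative of `u` along this field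
gives Rellich's identity, and there is no boundary term: the gradient of a Dirichlet function is
normal to the boundary. On the rectangle the identity leaves `∫ uₓ²`, so `∫ uₓ²`, and with it
`∫ u²` by a Poincaré inequality in `x`, is controlled by `(Δ - l) u` and by the energy
`u_y² + t² uₓ² + l u²` in the wings, where `t = (|x| - α) / β`.

Integrating by parts with the same weight `t`, which vanishes where the wings meet the rectangle,
bounds the wing energy by `ε ∫ |D²u|² + C ε⁻¹ ∫ u²`, the last integral being over the wings only.
Finally `∫ |D²u|² ≤ ∫ (Δu)²`, because the boundary term has a sign on a convex domain; with `ε` of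
order `l⁻²` and `l = λ²` the Hessian is absorbed, at the price of a factor `l² = λ⁴`.
-/

open scoped ContDiff Topology

section PartialDerivatives

variable {u v : ℝ × ℝ → ℝ} {p : ℝ × ℝ}

lemma pdx_eq_fderiv (h : DifferentiableAt ℝ u p) : pdx u p = fderiv ℝ u p (1, 0) :=
  (h.hasFDerivAt.comp_hasDerivAt p.1
    ((hasDerivAt_id p.1).prodMk (hasDerivAt_const p.1 p.2))).deriv

lemma pdy_eq_fderiv (h : DifferentiableAt ℝ u p) : pdy u p = fderiv ℝ u p (0, 1) :=
  (h.hasFDerivAt.comp_hasDerivAt p.2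
    ((hasDerivAt_const p.2 p.1).prodMk (hasDerivAt_id p.2))).deriv

lemma contDiff_pdx (h : ContDiff ℝ ∞ u) : ContDiff ℝ ∞ (pdx u) := by
  rw [show pdx u = fun p => fderiv ℝ u p (1, 0) from
    funext fun p => pdx_eq_fderiv (h.differentiable (by simp) p)]
  exact (h.fderiv_right (m := ∞) (by simp)).clm_apply contDiff_const

lemma contDiff_pdy (h : ContDiff ℝ ∞ u) : ContDiff ℝ ∞ (pdy u) := by
  rw [show pdy u = fun p => fderiv ℝ u p (0, 1) from
    funext fun p => pdy_eq_fderiv (h.differentiable (by simp) p)]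
  exact (h.fderiv_right (m := ∞) (by simp)).clm_apply contDiff_const

lemma continuous_lap (h : ContDiff ℝ ∞ u) : Continuous (lap u) := by
  have hx := (contDiff_pdx (contDiff_pdx h)).continuous
  have hy := (contDiff_pdy (contDiff_pdy h)).continuous
  unfold lap
  fun_prop

lemma hasDerivAt_comp_curve {c d : ℝ → ℝ} {c' d' θ : ℝ} (h : DifferentiableAt ℝ u (c θ, d θ))
    (hc : HasDerivAt c c' θ) (hd : HasDerivAt d d' θ) :
    HasDerivAt (fun s => u (c s, d s)) (pdx u (c θ, d θ) * c' + pdy u (c θ, d θ) * d') θ := by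
  refine (h.hasFDerivAt.comp_hasDerivAt θ (hc.prodMk hd)).congr_deriv ?_
  have hsplit : ((c', d') : ℝ × ℝ) = c' • ((1 : ℝ), (0 : ℝ)) + d' • ((0 : ℝ), (1 : ℝ)) := by simp
  rw [pdx_eq_fderiv h, pdy_eq_fderiv h, hsplit, map_add, map_smul, map_smul, smul_eq_mul,
    smul_eq_mul, mul_comm c', mul_comm d']

lemma hasDerivAt_pdx {x y : ℝ} (h : DifferentiableAt ℝ u (x, y)) :
    HasDerivAt (fun s => u (s, y)) (pdx u (x, y)) x := by
  simpa only [mul_one, mul_zero, add_zero] using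
    hasDerivAt_comp_curve h (hasDerivAt_id' x) (hasDerivAt_const x y)

lemma hasDerivAt_pdy {x y : ℝ} (h : DifferentiableAt ℝ u (x, y)) :
    HasDerivAt (fun s => u (x, s)) (pdy u (x, y)) y := by
  simpa only [mul_one, mul_zero, zero_add] using
    hasDerivAt_comp_curve h (hasDerivAt_const y x) (hasDerivAt_id' y)

lemma pdx_pdy_comm (h : ContDiff ℝ ∞ u) : pdx (pdy u) = pdy (pdx u) := by
  ext p
  have hd : DifferentiableAt ℝ (fderiv ℝ u) p :=
    (h.fderiv_right (m := ∞) (by simp)).differentiable (by simp) p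
  have hsymm : IsSymmSndFDerivAt ℝ u p := h.contDiffAt.isSymmSndFDerivAt <| by
    simpa using WithTop.coe_le_coe.2 (le_top : (2 : ℕ∞) ≤ ⊤)
  have hsnd (z w : ℝ × ℝ) :
      fderiv ℝ (fun q => fderiv ℝ u q z) p w = fderiv ℝ (fderiv ℝ u) p w z := by
    rw [fderiv_clm_apply hd (differentiableAt_const z)]
    simp
  have hdiff := h.differentiable (by simp)
  rw [pdx_eq_fderiv ((contDiff_pdy h).differentiable (by simp) p),
    pdy_eq_fderiv ((contDiff_pdx h).differentiable (by simp) p),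
    show pdy u = fun q => fderiv ℝ u q (0, 1) from funext fun q => pdy_eq_fderiv (hdiff q),
    show pdx u = fun q => fderiv ℝ u q (1, 0) from funext fun q => pdx_eq_fderiv (hdiff q),
    hsnd, hsnd, hsymm.eq]

lemma pdx_congr (h : u =ᶠ[𝓝 p] v) : pdx u =ᶠ[𝓝 p] pdx v := by
  filter_upwards [h.eventually_nhds] with q hq
  have hline : Tendsto (fun t : ℝ => (t, q.2)) (𝓝 q.1) (𝓝 q) :=
    Continuous.tendsto' (by fun_prop) _ _ rfl
  exact EventuallyEq.deriv_eq (hline.eventually hq)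

lemma pdy_congr (h : u =ᶠ[𝓝 p] v) : pdy u =ᶠ[𝓝 p] pdy v := by
  filter_upwards [h.eventually_nhds] with q hq
  have hline : Tendsto (fun t : ℝ => (q.1, t)) (𝓝 q.2) (𝓝 q) :=
    Continuous.tendsto' (by fun_prop) _ _ rfl
  exact EventuallyEq.deriv_eq (hline.eventually hq)

lemma lap_congr (h : u =ᶠ[𝓝 p] v) : lap u p = lap v p := by
  rw [lap, lap, (pdx_congr (pdx_congr h)).self_of_nhds, (pdy_congr (pdy_congr h)).self_of_nhds]

end PartialDerivatives

lemma exists_contDiff_eventuallyEq {E : Type*} [NormedAddCommGroup E] [NormedSpace ℝ E]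
    [FiniteDimensional ℝ E] {K V : Set E} (hK : IsCompact K) (hV : IsOpen V) (hKV : K ⊆ V)
    {u : E → ℝ} (hu : ContDiffOn ℝ ∞ u V) :
    ∃ U : E → ℝ, ContDiff ℝ ∞ U ∧ ∀ p ∈ K, U =ᶠ[𝓝 p] u := by
  obtain ⟨K', hK', hKK', hK'V⟩ := exists_compact_between hK hV hKV
  obtain ⟨χ, hχ_one, hχ_zero, -⟩ := exists_contMDiffMap_one_nhds_of_subset_interior
    (modelWithCornersSelf ℝ E) (n := (⊤ : ℕ∞)) hK.isClosed hKK'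
  refine ⟨fun p => χ p * u p, contDiff_iff_contDiffAt.2 fun p => ?_, fun p hp => ?_⟩
  · by_cases hp : p ∈ V
    · exact χ.contMDiff.contDiff.contDiffAt.mul (hu.contDiffAt (hV.mem_nhds hp))
    · refine (contDiffAt_const (c := (0 : ℝ))).congr_of_eventuallyEq ?_
      filter_upwards [hK'.isClosed.isOpen_compl.mem_nhds fun h => hp (hK'V h)] with q hq
      rw [hχ_zero q hq, zero_mul]
  · filter_upwards [hχ_one.filter_mono (nhds_le_nhdsSet hp)] with q hq
    rw [hq, one_mul]

section Slices

variable {S : Set (ℝ × ℝ)} {A : Set ℝ} {a b : ℝ → ℝ} {g : ℝ × ℝ → ℝ}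

lemma integral_indicator_slice {T : Set ℝ} {φ : ℝ → ℝ} {c d : ℝ} {P : Prop} [Decidable P]
    (hT : ∀ t, t ∈ T ↔ P ∧ t ∈ Icc c d) (hcd : P → c ≤ d) :
    ∫ t, T.indicator φ t = if P then ∫ t in c..d, φ t else 0 := by
  split_ifs with hP
  · rw [show T = Icc c d by ext t; simp [hT, hP], integral_indicator measurableSet_Icc,
      integral_Icc_eq_integral_Ioc, intervalIntegral.integral_of_le (hcd hP)]
  · rw [show T = ∅ by ext t; simp [hT, hP], indicator_empty]
    exact integral_zero ℝ ℝ

open Classical in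
lemma setIntegral_eq_integral_integral_snd (hS : MeasurableSet S) (hA : MeasurableSet A)
    (hmem : ∀ x y, (x, y) ∈ S ↔ x ∈ A ∧ y ∈ Icc (a x) (b x)) (hab : ∀ x ∈ A, a x ≤ b x)
    (hg : IntegrableOn g S) :
    ∫ p in S, g p = ∫ x in A, ∫ y in a x..b x, g (x, y) := by
  rw [← integral_indicator hS, Measure.volume_eq_prod, integral_prod _
    (by rwa [← Measure.volume_eq_prod, integrable_indicator_iff hS]), ← integral_indicator hA]
  refine integral_congr_ae (.of_forall fun x => ?_)
  exact integral_indicator_slice (T := {y | (x, y) ∈ S}) (hmem x) (hab x)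

open Classical in
lemma setIntegral_eq_integral_integral_fst (hS : MeasurableSet S) (hA : MeasurableSet A)
    (hmem : ∀ x y, (x, y) ∈ S ↔ y ∈ A ∧ x ∈ Icc (a y) (b y)) (hab : ∀ y ∈ A, a y ≤ b y)
    (hg : IntegrableOn g S) :
    ∫ p in S, g p = ∫ y in A, ∫ x in a y..b y, g (x, y) := by
  rw [← integral_indicator hS, Measure.volume_eq_prod, integral_prod_symm _
    (by rwa [← Measure.volume_eq_prod, integrable_indicator_iff hS]), ← integral_indicator hA]
  refine integral_congr_ae (.of_forall fun y => ?_)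
  exact integral_indicator_slice (T := {x | (x, y) ∈ S}) (hmem · y) (hab y)

end Slices

/-- Half the length of the chord at distance `t` from the centre of a disc of radius `β`. -/
def halfChord (β t : ℝ) : ℝ := √(β ^ 2 - t ^ 2)

/-- The function `sgn(x) w(x)` of the paper, continued by zero across the rectangle: the signed
horizontal distance to the rectangle, which describes the stadium by the single inequality
`wingOffset α x ^ 2 + y ^ 2 ≤ β ^ 2`. -/
def wingOffset (α x : ℝ) : ℝ := max (x - α) 0 + min (x + α) 0

section Geometry

variable {α β x y : ℝ}

lemma continuous_halfChord : Continuous (halfChord β) := by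
  unfold halfChord
  fun_prop

lemma halfChord_nonneg : 0 ≤ halfChord β x := sqrt_nonneg _

lemma halfChord_zero (hβ : 0 ≤ β) : halfChord β 0 = β := by simp [halfChord, sqrt_sq hβ]

lemma halfChord_neg : halfChord β (-x) = halfChord β x := by rw [halfChord, neg_sq, halfChord]

lemma sq_add_sq_le_sq_iff (hβ : 0 ≤ β) :
    x ^ 2 + y ^ 2 ≤ β ^ 2 ↔ |x| ≤ β ∧ |y| ≤ halfChord β x := by
  refine ⟨fun h => ⟨abs_le_of_sq_le_sq (by linarith [sq_nonneg y]) hβ,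
    abs_le_sqrt (by linarith)⟩, fun ⟨hx, hy⟩ => ?_⟩
  have hx' : 0 ≤ β ^ 2 - x ^ 2 := sub_nonneg.2 (sq_le_sq' (abs_le.1 hx).1 (abs_le.1 hx).2)
  linarith [sq_abs y, pow_le_pow_left₀ (abs_nonneg y) hy 2, sq_sqrt hx',
    show halfChord β x ^ 2 = √(β ^ 2 - x ^ 2) ^ 2 from rfl]

lemma continuous_wingOffset : Continuous (wingOffset α) := by
  unfold wingOffset
  fun_prop

lemma wingOffset_of_abs_le (h : |x| ≤ α) : wingOffset α x = 0 := by
  rw [wingOffset, max_eq_right (by linarith [(abs_le.1 h).2]),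
    min_eq_right (by linarith [(abs_le.1 h).1]), add_zero]

lemma wingOffset_of_le (hα : 0 ≤ α) (h : α ≤ x) : wingOffset α x = x - α := by
  rw [wingOffset, max_eq_left (by linarith), min_eq_right (by linarith), add_zero]

lemma wingOffset_of_le_neg (hα : 0 ≤ α) (h : x ≤ -α) : wingOffset α x = x + α := by
  rw [wingOffset, max_eq_right (by linarith), min_eq_left (by linarith), zero_add]

lemma abs_wingOffset (hα : 0 ≤ α) : |wingOffset α x| = max (|x| - α) 0 := by
  rcases le_total |x| α with h | h
  · rw [wingOffset_of_abs_le h, abs_zero, max_eq_right (by linarith)]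
  rw [max_eq_left (by linarith)]
  rcases le_abs.1 h with hx | hx
  · rw [wingOffset_of_le hα hx, abs_of_nonneg (by linarith), abs_of_nonneg (by linarith)]
  · rw [wingOffset_of_le_neg hα (by linarith), abs_of_nonpos (by linarith),
      abs_of_nonpos (by linarith)]
    ring

lemma abs_wingOffset_le_iff (hα : 0 ≤ α) (hy : 0 ≤ y) : |wingOffset α x| ≤ y ↔ |x| ≤ α + y := by
  rw [abs_wingOffset hα, max_le_iff, sub_le_iff_le_add', and_iff_left hy]

lemma mul_wingOffset (hα : 0 ≤ α) : x * wingOffset α x = |x| * |wingOffset α x| := by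
  rw [← abs_mul, eq_comm, abs_eq_self]
  rcases le_total |x| α with h | h
  · rw [wingOffset_of_abs_le h, mul_zero]
  rcases le_abs.1 h with hx | hx
  · rw [wingOffset_of_le hα hx]
    exact mul_nonneg (by linarith) (by linarith)
  · rw [wingOffset_of_le_neg hα (by linarith)]
    exact mul_nonneg_of_nonpos_of_nonpos (by linarith) (by linarith)

lemma hasDerivAt_wingOffset (hα : 0 ≤ α) (hx : x ∉ ({α, -α} : Set ℝ)) :
    HasDerivAt (wingOffset α) ((Icc (-α) α)ᶜ.indicator 1 x) x := by
  simp only [mem_insert_iff, mem_singleton_iff, not_or] at hx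
  by_cases h : x ∈ Icc (-α) α
  · rw [indicator_of_notMem (by simpa using h)]
    refine (hasDerivAt_const x (0 : ℝ)).congr_of_eventuallyEq ?_
    filter_upwards [Icc_mem_nhds (lt_of_le_of_ne h.1 (Ne.symm hx.2)) (lt_of_le_of_ne h.2 hx.1)]
      with t ht using wingOffset_of_abs_le (abs_le.2 ht)
  rw [indicator_of_mem (show x ∈ (Icc (-α) α)ᶜ from h), Pi.one_apply]
  rcases lt_or_gt_of_ne hx.1 with hlt | hgt
  · refine ((hasDerivAt_id x).add_const α).congr_of_eventuallyEq ?_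
    filter_upwards [Iio_mem_nhds (not_le.1 fun h' => h ⟨h', hlt.le⟩)] with t ht
      using wingOffset_of_le_neg hα (mem_Iio.1 ht).le
  · refine ((hasDerivAt_id x).sub_const α).congr_of_eventuallyEq ?_
    filter_upwards [Ioi_mem_nhds hgt] with t ht using wingOffset_of_le hα (mem_Ioi.1 ht).le

lemma indicator_mul_wingOffset :
    (Icc (-α) α)ᶜ.indicator 1 x * wingOffset α x = wingOffset α x := by
  by_cases h : x ∈ Icc (-α) α
  · rw [wingOffset_of_abs_le (abs_le.2 h), mul_zero]
  · rw [indicator_of_mem (show x ∈ (Icc (-α) α)ᶜ from h), Pi.one_apply, one_mul]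

lemma mem_wings_iff (hα : 0 ≤ α) :
    (x, y) ∈ Wings α β ↔ α ≤ |x| ∧ wingOffset α x ^ 2 + y ^ 2 ≤ β ^ 2 := by
  simp only [Wings, mem_union, mem_ofPred_eq]
  constructor
  · rintro (⟨h, hx⟩ | ⟨h, hx⟩)
    · exact ⟨hx.trans (le_abs_self x), by rwa [wingOffset_of_le hα hx]⟩
    · exact ⟨le_abs.2 (.inr (by linarith)), by rwa [wingOffset_of_le_neg hα hx]⟩
  · rintro ⟨hx, h⟩
    rcases le_abs.1 hx with hx | hx
    · exact .inl ⟨by rwa [wingOffset_of_le hα hx] at h, hx⟩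
    · have hx' : x ≤ -α := by linarith
      exact .inr ⟨by rwa [wingOffset_of_le_neg hα hx'] at h, hx'⟩

lemma mem_stadium_iff (hα : 0 ≤ α) (hβ : 0 ≤ β) :
    (x, y) ∈ Stadium α β ↔ wingOffset α x ^ 2 + y ^ 2 ≤ β ^ 2 := by
  have hrect : (x, y) ∈ Rect α β ↔ |x| ≤ α ∧ |y| ≤ β := by
    simp only [Rect, mem_prod, mem_Icc, abs_le]
  rw [Stadium, mem_union, hrect, mem_wings_iff hα]
  constructor
  · rintro (⟨hx, hy⟩ | h)
    · rw [wingOffset_of_abs_le hx, zero_pow two_ne_zero, zero_add]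
      exact sq_le_sq' (abs_le.1 hy).1 (abs_le.1 hy).2
    · exact h.2
  · intro h
    refine (le_total |x| α).imp (fun hx => ⟨hx, ?_⟩) fun hx => ⟨hx, h⟩
    exact abs_le_of_sq_le_sq (by linarith [sq_nonneg (wingOffset α x)]) hβ

lemma mem_stadium_iff_snd (hα : 0 ≤ α) (hβ : 0 ≤ β) :
    (x, y) ∈ Stadium α β ↔ x ∈ Icc (-(α + β)) (α + β) ∧
      y ∈ Icc (-halfChord β (wingOffset α x)) (halfChord β (wingOffset α x)) := by
  rw [mem_stadium_iff hα hβ, sq_add_sq_le_sq_iff hβ, abs_wingOffset_le_iff hα hβ, mem_Icc, mem_Icc,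
    abs_le, abs_le]

lemma mem_stadium_iff_fst (hα : 0 ≤ α) (hβ : 0 ≤ β) :
    (x, y) ∈ Stadium α β ↔ y ∈ Icc (-β) β ∧
      x ∈ Icc (-(α + halfChord β y)) (α + halfChord β y) := by
  rw [mem_stadium_iff hα hβ, add_comm, sq_add_sq_le_sq_iff hβ,
    abs_wingOffset_le_iff hα halfChord_nonneg, mem_Icc, mem_Icc, abs_le, abs_le]

lemma mem_wings_iff_snd (hα : 0 ≤ α) (hβ : 0 ≤ β) :
    (x, y) ∈ Wings α β ↔ x ∈ abs ⁻¹' Icc α (α + β) ∧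
      y ∈ Icc (-halfChord β (wingOffset α x)) (halfChord β (wingOffset α x)) := by
  rw [mem_wings_iff hα, sq_add_sq_le_sq_iff hβ, abs_wingOffset_le_iff hα hβ, mem_preimage, mem_Icc,
    mem_Icc, and_assoc, ← abs_le]

lemma wings_subset_stadium : Wings α β ⊆ Stadium α β := subset_union_right

lemma isCompact_disc (c β : ℝ) : IsCompact {p : ℝ × ℝ | (p.1 - c) ^ 2 + p.2 ^ 2 ≤ β ^ 2} := by
  refine (isCompact_Icc (a := ((c - |β|, -|β|) : ℝ × ℝ)) (b := (c + |β|, |β|))).of_isClosed_subset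
    (isClosed_le (by fun_prop) (by fun_prop)) fun p hp => ?_
  have hfst := abs_le.1 (sq_le_sq.1 (le_of_add_le_of_nonneg_left hp (sq_nonneg p.2)))
  have hsnd := abs_le.1 (sq_le_sq.1 (le_of_add_le_of_nonneg_right hp (sq_nonneg (p.1 - c))))
  exact ⟨⟨by linarith [hfst.1], hsnd.1⟩, by linarith [hfst.2], hsnd.2⟩

lemma isCompact_wings (α β : ℝ) : IsCompact (Wings α β) := by
  have hright := (isCompact_disc α β).inter_right
    (isClosed_le (continuous_const (y := α)) continuous_fst)
  have hleft := (isCompact_disc (-α) β).inter_right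
    (isClosed_le continuous_fst (continuous_const (y := -α)))
  simp only [sub_neg_eq_add] at hleft
  exact hright.union hleft

lemma isCompact_stadium (α β : ℝ) : IsCompact (Stadium α β) :=
  (isCompact_Icc.prod isCompact_Icc).union (isCompact_wings α β)

end Geometry

/-- `IsOutwardNormal α β p n` says that `n` is an outward unit normal of the stadium at the boundary
point `p`, in the parametrization of the boundary used by `bdryInt`. -/
inductive IsOutwardNormal (α β : ℝ) : ℝ × ℝ → ℝ × ℝ → Prop
  | top {x : ℝ} (hx : x ∈ Icc (-α) α) : IsOutwardNormal α β (x, β) (0, 1)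
  | bottom {x : ℝ} (hx : x ∈ Icc (-α) α) : IsOutwardNormal α β (x, -β) (0, -1)
  | right {θ : ℝ} (hθ : θ ∈ Icc (-(π / 2)) (π / 2)) :
      IsOutwardNormal α β (α + β * cos θ, β * sin θ) (cos θ, sin θ)
  | left {θ : ℝ} (hθ : θ ∈ Icc (-(π / 2)) (π / 2)) :
      IsOutwardNormal α β (-(α + β * cos θ), β * sin θ) (-cos θ, sin θ)

section Boundary

variable {α β : ℝ} {p n : ℝ × ℝ} {g h : ℝ × ℝ → ℝ × ℝ → ℝ}

lemma neg_pi_div_two_le_pi_div_two : -(π / 2) ≤ π / 2 := by linarith [pi_pos]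

lemma stadiumBoundary_subset_stadium (hα : 0 ≤ α) (hβ : 0 ≤ β) :
    StadiumBoundary α β ⊆ Stadium α β := by
  rintro ⟨x, y⟩ (⟨hx, hy⟩ | ⟨h, hx⟩)
  · rw [mem_stadium_iff hα hβ, wingOffset_of_abs_le hx, zero_pow two_ne_zero, zero_add]
    exact (sq_eq_sq_iff_eq_or_eq_neg.2 hy).le
  · rw [mem_stadium_iff hα hβ, ← sq_abs (wingOffset α x), abs_wingOffset hα,
      max_eq_left (sub_nonneg.2 hx)]
    exact h.le

lemma IsOutwardNormal.mem_stadiumBoundary (hα : 0 ≤ α) (hβ : 0 ≤ β)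
    (h : IsOutwardNormal α β p n) : p ∈ StadiumBoundary α β := by
  have harc {θ : ℝ} : (α + β * cos θ - α) ^ 2 + (β * sin θ) ^ 2 = β ^ 2 := by
    linear_combination β ^ 2 * sin_sq_add_cos_sq θ
  have habs {θ : ℝ} (hθ : θ ∈ Icc (-(π / 2)) (π / 2)) : α ≤ α + β * cos θ :=
    le_add_of_nonneg_right (mul_nonneg hβ (cos_nonneg_of_mem_Icc hθ))
  cases h with
  | top hx => exact .inl ⟨abs_le.2 hx, .inl rfl⟩
  | bottom hx => exact .inl ⟨abs_le.2 hx, .inr rfl⟩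
  | right hθ =>
    refine .inr ?_
    simp only [mem_ofPred_eq, abs_of_nonneg (hα.trans (habs hθ))]
    exact ⟨harc, habs hθ⟩
  | left hθ =>
    refine .inr ?_
    simp only [mem_ofPred_eq, abs_neg, abs_of_nonneg (hα.trans (habs hθ))]
    exact ⟨harc, habs hθ⟩

lemma IsOutwardNormal.sq_add_sq (h : IsOutwardNormal α β p n) : n.1 ^ 2 + n.2 ^ 2 = 1 := by
  cases h <;> simp

lemma bdryInt_congr (hα : 0 ≤ α) (hgh : ∀ p n, IsOutwardNormal α β p n → g p n = h p n) :
    bdryInt α β g = bdryInt α β h := by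
  have hle : -α ≤ α := by linarith
  rw [bdryInt, bdryInt]
  congr 1
  · refine intervalIntegral.integral_congr fun x hx => ?_
    rw [uIcc_of_le hle] at hx
    exact congr_arg₂ _ (hgh _ _ (.top hx)) (hgh _ _ (.bottom hx))
  · refine congr_arg _ (intervalIntegral.integral_congr fun θ hθ => ?_)
    rw [uIcc_of_le neg_pi_div_two_le_pi_div_two] at hθ
    exact congr_arg₂ _ (hgh _ _ (.right hθ)) (hgh _ _ (.left hθ))

lemma bdryInt_eq_zero (hα : 0 ≤ α) (hg : ∀ p n, IsOutwardNormal α β p n → g p n = 0) :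
    bdryInt α β g = 0 :=
  (bdryInt_congr (h := fun _ _ => 0) hα hg).trans (by simp [bdryInt])

lemma bdryInt_add (hg : Continuous fun q : (ℝ × ℝ) × ℝ × ℝ => g q.1 q.2)
    (hh : Continuous fun q : (ℝ × ℝ) × ℝ × ℝ => h q.1 q.2) :
    bdryInt α β (fun p n => g p n + h p n) = bdryInt α β g + bdryInt α β h := by
  have hcont {k : ℝ × ℝ → ℝ × ℝ → ℝ} (hk : Continuous fun q : (ℝ × ℝ) × ℝ × ℝ => k q.1 q.2)
      {p n : ℝ → ℝ × ℝ} (hp : Continuous p) (hn : Continuous n) :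
      Continuous fun t => k (p t) (n t) := hk.comp (hp.prodMk hn)
  have hsplit {a b : ℝ} {p₁ n₁ p₂ n₂ : ℝ → ℝ × ℝ} (hp₁ : Continuous p₁) (hn₁ : Continuous n₁)
      (hp₂ : Continuous p₂) (hn₂ : Continuous n₂) :
      ∫ t in a..b, (g (p₁ t) (n₁ t) + h (p₁ t) (n₁ t) + (g (p₂ t) (n₂ t) + h (p₂ t) (n₂ t))) =
        (∫ t in a..b, (g (p₁ t) (n₁ t) + g (p₂ t) (n₂ t))) +
          ∫ t in a..b, (h (p₁ t) (n₁ t) + h (p₂ t) (n₂ t)) := by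
    rw [← intervalIntegral.integral_add
      (((hcont hg hp₁ hn₁).fun_add (hcont hg hp₂ hn₂)).intervalIntegrable _ _)
      (((hcont hh hp₁ hn₁).fun_add (hcont hh hp₂ hn₂)).intervalIntegrable _ _)]
    exact intervalIntegral.integral_congr fun _ _ => add_add_add_comm _ _ _ _
  rw [bdryInt, hsplit (by fun_prop) (by fun_prop) (by fun_prop) (by fun_prop),
    hsplit (by fun_prop) (by fun_prop) (by fun_prop) (by fun_prop), mul_add, add_add_add_comm,
    ← bdryInt, ← bdryInt]

lemma bdryIntW_nonneg (hβ : 0 ≤ β) (hg : ∀ p n, 0 ≤ g p n) : 0 ≤ bdryIntW α β g :=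
  mul_nonneg hβ <| intervalIntegral.integral_nonneg neg_pi_div_two_le_pi_div_two
    fun _ _ => add_nonneg (hg _ _) (hg _ _)

end Boundary

section HalfDisc

variable {β : ℝ} {φ : ℝ × ℝ → ℝ}

lemma halfChord_mul_sin {θ : ℝ} (hβ : 0 ≤ β) (hθ : 0 ≤ cos θ) :
    halfChord β (β * sin θ) = β * cos θ := by
  rw [halfChord, show β ^ 2 - (β * sin θ) ^ 2 = (β * cos θ) ^ 2 by
    linear_combination -β ^ 2 * sin_sq_add_cos_sq θ, sqrt_sq (mul_nonneg hβ hθ)]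

lemma halfChord_mul_cos {θ : ℝ} (hβ : 0 ≤ β) (hθ : 0 ≤ sin θ) :
    halfChord β (β * cos θ) = β * sin θ := by
  rw [halfChord, show β ^ 2 - (β * cos θ) ^ 2 = (β * sin θ) ^ 2 by
    linear_combination -β ^ 2 * sin_sq_add_cos_sq θ, sqrt_sq (mul_nonneg hβ hθ)]

lemma integral_halfChord_left (hβ : 0 ≤ β) (hφ : Continuous φ) :
    ∫ y in (-β)..β, φ (halfChord β y, y) =
      β * ∫ θ in (-(π / 2))..(π / 2), cos θ * φ (β * cos θ, β * sin θ) := by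
  have hsubst := intervalIntegral.integral_comp_mul_deriv (a := -(π / 2)) (b := π / 2)
    (fun θ _ => (hasDerivAt_sin θ).const_mul β) (by fun_prop)
    (show Continuous fun y => φ (halfChord β y, y) from
      hφ.comp (continuous_halfChord.prodMk continuous_id))
  rw [sin_neg, sin_pi_div_two, mul_neg_one, mul_one] at hsubst
  rw [← hsubst, ← intervalIntegral.integral_const_mul]
  refine intervalIntegral.integral_congr fun θ hθ => ?_
  rw [uIcc_of_le neg_pi_div_two_le_pi_div_two] at hθ
  simp only [Function.comp_apply, halfChord_mul_sin hβ (cos_nonneg_of_mem_Icc hθ)]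
  ring

lemma integral_halfChord_right (hβ : 0 ≤ β) (hφ : Continuous φ) :
    ∫ t in 0..β, φ (t, halfChord β t) =
      β * ∫ θ in 0..(π / 2), sin θ * φ (β * cos θ, β * sin θ) := by
  have hsubst := intervalIntegral.integral_comp_mul_deriv (a := π / 2) (b := 0)
    (fun θ _ => (hasDerivAt_cos θ).const_mul β) (by fun_prop)
    (show Continuous fun t => φ (t, halfChord β t) from
      hφ.comp (continuous_id.prodMk continuous_halfChord))
  rw [cos_zero, cos_pi_div_two, mul_zero, mul_one] at hsubst
  rw [← hsubst, intervalIntegral.integral_symm, ← intervalIntegral.integral_neg,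
    ← intervalIntegral.integral_const_mul]
  refine intervalIntegral.integral_congr fun θ hθ => ?_
  rw [uIcc_of_le (by positivity)] at hθ
  simp only [Function.comp_apply, halfChord_mul_cos hβ
    (sin_nonneg_of_nonneg_of_le_pi hθ.1 (hθ.2.trans (by linarith [pi_pos])))]
  ring

lemma integral_halfChord_sub (hβ : 0 ≤ β) (hφ : Continuous φ) :
    ∫ t in 0..β, (φ (t, halfChord β t) - φ (t, -halfChord β t)) =
      β * ∫ θ in (-(π / 2))..(π / 2), sin θ * φ (β * cos θ, β * sin θ) := by
  have hk := continuous_halfChord (β := β)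
  have hlower := integral_halfChord_right hβ (φ := fun p => φ (p.1, -p.2)) (by fun_prop)
  have hreflect : ∫ θ in 0..(π / 2), sin θ * φ (β * cos θ, -(β * sin θ)) =
      -∫ θ in (-(π / 2))..0, sin θ * φ (β * cos θ, β * sin θ) := by
    rw [← intervalIntegral.integral_neg, ← neg_zero, ← intervalIntegral.integral_comp_neg]
    simp only [sin_neg, cos_neg, mul_neg, neg_mul, neg_neg, neg_zero]
  have hint (a b : ℝ) :
      IntervalIntegrable (fun θ => sin θ * φ (β * cos θ, β * sin θ)) volume a b :=
    Continuous.intervalIntegrable (by fun_prop) a b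
  rw [intervalIntegral.integral_sub (Continuous.intervalIntegrable (by fun_prop) _ _)
    (Continuous.intervalIntegrable (by fun_prop) _ _), hlower, hreflect,
    integral_halfChord_right hβ hφ]
  linear_combination
    β * intervalIntegral.integral_add_adjacent_intervals (hint (-(π / 2)) 0) (hint 0 (π / 2))

end HalfDisc

section GaussGreen

variable {α β : ℝ} {F G f g : ℝ × ℝ → ℝ} {s : Set ℝ}

lemma setIntegral_deriv_fst_eq_bdryInt (hα : 0 ≤ α) (hβ : 0 ≤ β) (hF : Continuous F)
    (hs : s.Countable) (hderiv : ∀ x y, x ∉ s → HasDerivAt (fun t => F (t, y)) (f (x, y)) x)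
    (hf : IntegrableOn f (Stadium α β))
    (hslice : ∀ y c d, IntervalIntegrable (fun x => f (x, y)) volume c d) :
    ∫ p in Stadium α β, f p = bdryInt α β fun p n => n.1 * F p := by
  have hwidth (y : ℝ) : -(α + halfChord β y) ≤ α + halfChord β y := by
    linarith [halfChord_nonneg (β := β) (x := y)]
  rw [setIntegral_eq_integral_integral_fst (isCompact_stadium α β).measurableSet measurableSet_Icc
    (fun x y => mem_stadium_iff_fst hα hβ) (fun y _ => hwidth y) hf]
  have hslices (y : ℝ) : ∫ x in (-(α + halfChord β y))..(α + halfChord β y), f (x, y) =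
      F (α + halfChord β y, y) - F (-(α + halfChord β y), y) :=
    integral_eq_of_hasDerivAt_off_countable (fun x => F (x, y)) _ hs (by fun_prop)
      (fun x hx => hderiv x y hx.2) (hslice y _ _)
  simp only [hslices]
  rw [integral_Icc_eq_integral_Ioc, ← intervalIntegral.integral_of_le (by linarith),
    integral_halfChord_left (φ := fun p => F (α + p.1, p.2) - F (-(α + p.1), p.2)) hβ
      (by fun_prop), bdryInt]
  simp only [zero_mul, add_zero, intervalIntegral.integral_zero, zero_add]
  refine congr_arg _ (intervalIntegral.integral_congr fun θ _ => ?_)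
  ring

lemma integral_neg_add_add_eq {h : ℝ → ℝ} (hh : Continuous h) {a b : ℝ} :
    ∫ x in (-(a + b))..(a + b), h x =
      (∫ x in (-a)..a, h x) + ∫ t in 0..b, (h (a + t) + h (-(a + t))) := by
  have hint (c d : ℝ) : IntervalIntegrable h volume c d := hh.intervalIntegrable c d
  have hright := intervalIntegral.integral_comp_add_left (a := 0) (b := b) h a
  have hleft := intervalIntegral.integral_comp_sub_left (a := 0) (b := b) h (-a)
  rw [intervalIntegral.integral_add (Continuous.intervalIntegrable (by fun_prop) _ _)
    (Continuous.intervalIntegrable (by fun_prop) _ _), hright]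
  simp only [neg_add', hleft, add_zero, sub_zero]
  rw [← intervalIntegral.integral_add_adjacent_intervals (hint _ (-a)) (hint _ _),
    ← intervalIntegral.integral_add_adjacent_intervals (hint (-a) a) (hint _ _)]
  ring

lemma integral_deriv_snd_slice (hα : 0 ≤ α) (hβ : 0 ≤ β) (hG : Continuous G) :
    ∫ x in (-(α + β))..(α + β), (G (x, halfChord β (wingOffset α x)) -
      G (x, -halfChord β (wingOffset α x))) = bdryInt α β fun p n => n.2 * G p := by
  have hk := continuous_halfChord (β := β)
  have he := continuous_wingOffset (α := α)
  have hmiddle : ∫ x in (-α)..α, (G (x, halfChord β (wingOffset α x)) -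
      G (x, -halfChord β (wingOffset α x))) = ∫ x in (-α)..α, (G (x, β) - G (x, -β)) := by
    refine intervalIntegral.integral_congr fun x hx => ?_
    rw [uIcc_of_le (by linarith)] at hx
    simp only [wingOffset_of_abs_le (abs_le.2 hx), halfChord_zero hβ]
  have hwings := integral_halfChord_sub hβ
    (φ := fun p => G (α + p.1, p.2) + G (-(α + p.1), p.2)) (by fun_prop)
  rw [integral_neg_add_add_eq (by fun_prop), hmiddle, bdryInt]
  simp only [one_mul, neg_mul, ← sub_eq_add_neg, ← mul_add]
  rw [← hwings]
  congr 1
  refine intervalIntegral.integral_congr fun t ht => ?_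
  rw [uIcc_of_le hβ] at ht
  have hle : α ≤ α + t := le_add_of_nonneg_right ht.1
  have hright : wingOffset α (α + t) = t := by rw [wingOffset_of_le hα hle, add_sub_cancel_left]
  have hleft : wingOffset α (-(α + t)) = -t := by
    rw [wingOffset_of_le_neg hα (neg_le_neg hle)]
    ring
  simp only [hright, hleft, halfChord_neg]
  ring

lemma setIntegral_deriv_snd_eq_bdryInt (hα : 0 ≤ α) (hβ : 0 ≤ β) (hG : Continuous G)
    (hg : Continuous g) (hderiv : ∀ x y, HasDerivAt (fun t => G (x, t)) (g (x, y)) y) :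
    ∫ p in Stadium α β, g p = bdryInt α β fun p n => n.2 * G p := by
  rw [setIntegral_eq_integral_integral_snd (isCompact_stadium α β).measurableSet measurableSet_Icc
    (fun x y => mem_stadium_iff_snd hα hβ)
    (fun x _ => neg_le_self halfChord_nonneg)
    (hg.continuousOn.integrableOn_compact (isCompact_stadium α β)),
    ← integral_deriv_snd_slice hα hβ hG, integral_Icc_eq_integral_Ioc,
    ← intervalIntegral.integral_of_le (by linarith)]
  refine intervalIntegral.integral_congr fun x _ => ?_
  exact intervalIntegral.integral_eq_sub_of_hasDerivAt (fun y _ => hderiv x y)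
    (Continuous.intervalIntegrable (by fun_prop) _ _)

lemma setIntegral_divergence_eq_bdryInt (hα : 0 ≤ α) (hβ : 0 ≤ β) (hF : Continuous F)
    (hG : Continuous G) (hs : s.Countable)
    (hderivF : ∀ x y, x ∉ s → HasDerivAt (fun t => F (t, y)) (f (x, y)) x)
    (hf : IntegrableOn f (Stadium α β))
    (hslice : ∀ y c d, IntervalIntegrable (fun x => f (x, y)) volume c d)
    (hg : Continuous g) (hderivG : ∀ x y, HasDerivAt (fun t => G (x, t)) (g (x, y)) y) :
    ∫ p in Stadium α β, (f p + g p) = bdryInt α β fun p n => n.1 * F p + n.2 * G p := by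
  rw [integral_add hf (hg.continuousOn.integrableOn_compact (isCompact_stadium α β)),
    setIntegral_deriv_fst_eq_bdryInt hα hβ hF hs hderivF hf hslice,
    setIntegral_deriv_snd_eq_bdryInt hα hβ hG hg hderivG, bdryInt_add (by fun_prop) (by fun_prop)]

end GaussGreen

lemma eq_zero_of_hasDerivAt_of_eqOn_zero {f : ℝ → ℝ} {f' a b x : ℝ} (hab : a < b)
    (hx : x ∈ Icc a b) (hf : HasDerivAt f f' x) (hzero : ∀ t ∈ Icc a b, f t = 0) : f' = 0 :=
  (uniqueDiffOn_Icc hab x hx).eq_deriv _ hf.hasDerivWithinAt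
    ((hasDerivWithinAt_const x (Icc a b) (0 : ℝ)).congr hzero (hzero x hx))

section DirichletData

variable {α β : ℝ} {u : ℝ × ℝ → ℝ} {p n : ℝ × ℝ}

lemma hasDerivAt_comp_arc (σ θ : ℝ) (hu : Differentiable ℝ u) :
    HasDerivAt (fun s => u (σ * (α + β * cos s), β * sin s))
      (β * (cos θ * pdy u (σ * (α + β * cos θ), β * sin θ) -
        σ * sin θ * pdx u (σ * (α + β * cos θ), β * sin θ))) θ :=
  (hasDerivAt_comp_curve (hu _)
    ((((hasDerivAt_cos θ).const_mul β).const_add α).const_mul σ)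
    ((hasDerivAt_sin θ).const_mul β)).congr_deriv (by ring)

lemma IsOutwardNormal.tangential_deriv_eq_zero (hα : 0 < α) (hβ : 0 < β)
    (hu : Differentiable ℝ u) (hzero : ∀ p ∈ StadiumBoundary α β, u p = 0)
    (h : IsOutwardNormal α β p n) : n.1 * pdy u p = n.2 * pdx u p := by
  have hmem {p n : ℝ × ℝ} (h : IsOutwardNormal α β p n) : u p = 0 :=
    hzero p (h.mem_stadiumBoundary hα.le hβ.le)
  have hflat : -α < α := by linarith
  have harc : -(π / 2) < π / 2 := by linarith [pi_pos]
  cases h with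
  | top hx =>
    simpa using (eq_zero_of_hasDerivAt_of_eqOn_zero hflat hx (hasDerivAt_pdx (hu _))
      fun t ht => hmem (.top ht)).symm
  | bottom hx =>
    simpa using eq_zero_of_hasDerivAt_of_eqOn_zero hflat hx (hasDerivAt_pdx (hu _))
      fun t ht => hmem (.bottom ht)
  | right hθ =>
    have hderiv := eq_zero_of_hasDerivAt_of_eqOn_zero harc hθ (hasDerivAt_comp_arc 1 _ hu)
      fun t ht => by simpa only [one_mul] using hmem (.right ht)
    have := (mul_eq_zero.1 hderiv).resolve_left hβ.ne'
    simp only [one_mul] at this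
    exact sub_eq_zero.1 this
  | left hθ =>
    have hderiv := eq_zero_of_hasDerivAt_of_eqOn_zero harc hθ (hasDerivAt_comp_arc (-1) _ hu)
      fun t ht => by simpa only [neg_one_mul] using hmem (.left ht)
    have := (mul_eq_zero.1 hderiv).resolve_left hβ.ne'
    simp only [neg_one_mul] at this
    linear_combination -this

lemma IsOutwardNormal.pdx_eq_nderiv_mul (hα : 0 < α) (hβ : 0 < β) (hu : Differentiable ℝ u)
    (hzero : ∀ p ∈ StadiumBoundary α β, u p = 0) (h : IsOutwardNormal α β p n) :
    pdx u p = nderiv u p n * n.1 := by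
  rw [nderiv]
  linear_combination (-pdx u p) * h.sq_add_sq
    - n.2 * h.tangential_deriv_eq_zero hα hβ hu hzero

lemma IsOutwardNormal.pdy_eq_nderiv_mul (hα : 0 < α) (hβ : 0 < β) (hu : Differentiable ℝ u)
    (hzero : ∀ p ∈ StadiumBoundary α β, u p = 0) (h : IsOutwardNormal α β p n) :
    pdy u p = nderiv u p n * n.2 := by
  rw [nderiv]
  linear_combination (-pdy u p) * h.sq_add_sq
    + n.1 * h.tangential_deriv_eq_zero hα hβ hu hzero

end DirichletData

lemma integrableOn_stadium {α β : ℝ} {g : ℝ × ℝ → ℝ} (hg : Continuous g) :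
    IntegrableOn g (Stadium α β) :=
  hg.continuousOn.integrableOn_compact (isCompact_stadium α β)

section Hessian

-- A gradient `(P, Q)` with no component tangential to a curve of unit normal `(cos θ, sin θ)` is
-- `v` times the normal, and `P Q' - P' Q = v ^ 2` because the normal turns at unit speed.
lemma integral_mul_deriv_eq_half_integral_sq {P Q P' Q' : ℝ → ℝ}
    (hP : ∀ θ, HasDerivAt P (P' θ) θ) (hQ : ∀ θ, HasDerivAt Q (Q' θ) θ)
    (hP' : Continuous P') (hQ' : Continuous Q')
    (htan : ∀ θ ∈ Icc (-(π / 2)) (π / 2), cos θ * Q θ = sin θ * P θ) :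
    ∫ θ in (-(π / 2))..(π / 2), P θ * Q' θ =
      (∫ θ in (-(π / 2))..(π / 2), (cos θ * P θ + sin θ * Q θ) ^ 2) / 2 := by
  have hPc : Continuous P := continuous_iff_continuousAt.2 fun θ => (hP θ).continuousAt
  have hQc : Continuous Q := continuous_iff_continuousAt.2 fun θ => (hQ θ).continuousAt
  have hle := neg_pi_div_two_le_pi_div_two
  have hparts := intervalIntegral.integral_mul_deriv_eq_deriv_mul (fun θ _ => hP θ)
    (fun θ _ => hQ θ) (hP'.intervalIntegrable (-(π / 2)) (π / 2)) (hQ'.intervalIntegrable _ _)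
  have hend : P (π / 2) = 0 ∧ P (-(π / 2)) = 0 := by
    constructor
    · simpa using (htan (π / 2) ⟨hle, le_rfl⟩).symm
    · simpa using htan (-(π / 2)) ⟨le_rfl, hle⟩
  have hderiv (θ : ℝ) (hθ : θ ∈ Icc (-(π / 2)) (π / 2)) :
      cos θ * Q' θ - sin θ * P' θ = cos θ * P θ + sin θ * Q θ := by
    have := eq_zero_of_hasDerivAt_of_eqOn_zero (by linarith [pi_pos]) hθ
      (((hasDerivAt_cos θ).mul (hQ θ)).sub ((hasDerivAt_sin θ).mul (hP θ)))
      fun t ht => sub_eq_zero.2 (htan t ht)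
    linear_combination this
  have hwronskian : ∫ θ in (-(π / 2))..(π / 2), (P θ * Q' θ - P' θ * Q θ) =
      ∫ θ in (-(π / 2))..(π / 2), (cos θ * P θ + sin θ * Q θ) ^ 2 := by
    refine intervalIntegral.integral_congr fun θ hθ => ?_
    rw [uIcc_of_le hle] at hθ
    linear_combination (cos θ * P θ + sin θ * Q θ) * hderiv θ hθ
      - (sin θ * Q' θ + cos θ * P' θ) * htan θ hθ
      - (P θ * Q' θ - P' θ * Q θ) * sin_sq_add_cos_sq θ
  rw [intervalIntegral.integral_sub (Continuous.intervalIntegrable (by fun_prop) _ _)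
    (Continuous.intervalIntegrable (by fun_prop) _ _)] at hwronskian
  rw [hend.1, hend.2] at hparts
  linarith

variable {α β : ℝ} {u : ℝ × ℝ → ℝ}

lemma setIntegral_hessian_det_eq_bdryInt (hα : 0 ≤ α) (hβ : 0 ≤ β) (hu : ContDiff ℝ ∞ u) :
    ∫ p in Stadium α β, (pdx (pdx u) p * pdy (pdy u) p - pdy (pdx u) p ^ 2) =
      bdryInt α β fun p n => n.1 * (pdx u p * pdy (pdy u) p) +
        n.2 * (-(pdx u p * pdy (pdx u) p)) := by
  have hx := contDiff_pdx hu
  have hy := contDiff_pdy hu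
  have hxx := contDiff_pdx hx
  have hxy := contDiff_pdy hx
  have hyy := contDiff_pdy hy
  have hxyy : pdx (pdy (pdy u)) = pdy (pdy (pdx u)) := by
    rw [pdx_pdy_comm hy, pdx_pdy_comm hu]
  have := (contDiff_pdx hyy).continuous
  have := (contDiff_pdy hxy).continuous
  have := hx.continuous
  have := hxx.continuous
  have := hxy.continuous
  have := hyy.continuous
  have hdiff {v : ℝ × ℝ → ℝ} (hv : ContDiff ℝ ∞ v) : Differentiable ℝ v :=
    hv.differentiable (by simp)
  rw [← setIntegral_divergence_eq_bdryInt hα hβ (F := fun p => pdx u p * pdy (pdy u) p)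
    (G := fun p => -(pdx u p * pdy (pdx u) p)) (by fun_prop) (by fun_prop) countable_empty
    (f := fun p => pdx (pdx u) p * pdy (pdy u) p + pdx u p * pdx (pdy (pdy u)) p)
    (g := fun p => -(pdy (pdx u) p * pdy (pdx u) p + pdx u p * pdy (pdy (pdx u)) p))
    (fun x y _ => (hasDerivAt_pdx (hdiff hx (x, y))).fun_mul (hasDerivAt_pdx (hdiff hyy (x, y))))
    (integrableOn_stadium (by fun_prop))
    (fun y c d => Continuous.intervalIntegrable (by fun_prop) c d) (by fun_prop) fun x y =>
      ((hasDerivAt_pdy (hdiff hx (x, y))).fun_mul (hasDerivAt_pdy (hdiff hxy (x, y)))).fun_neg]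
  refine integral_congr_ae (.of_forall fun p => ?_)
  simp only [hxyy]
  ring

lemma integral_arc_hessian_flux {σ : ℝ} (hσ : σ ^ 2 = 1) (hu : ContDiff ℝ ∞ u)
    (htan : ∀ θ ∈ Icc (-(π / 2)) (π / 2),
      σ * cos θ * pdy u (σ * (α + β * cos θ), β * sin θ) =
        sin θ * pdx u (σ * (α + β * cos θ), β * sin θ)) :
    β * ∫ θ in (-(π / 2))..(π / 2),
      (σ * cos θ * (pdx u (σ * (α + β * cos θ), β * sin θ) *
          pdy (pdy u) (σ * (α + β * cos θ), β * sin θ)) +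
        sin θ * (-(pdx u (σ * (α + β * cos θ), β * sin θ) *
          pdy (pdx u) (σ * (α + β * cos θ), β * sin θ)))) =
    (∫ θ in (-(π / 2))..(π / 2),
      nderiv u (σ * (α + β * cos θ), β * sin θ) (σ * cos θ, sin θ) ^ 2) / 2 := by
  have hdiff {v : ℝ × ℝ → ℝ} (hv : ContDiff ℝ ∞ v) : Differentiable ℝ v :=
    hv.differentiable (by simp)
  have hx := contDiff_pdx hu
  have hy := contDiff_pdy hu
  have := (contDiff_pdx hx).continuous
  have := (contDiff_pdy hx).continuous
  have := (contDiff_pdx hy).continuous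
  have := (contDiff_pdy hy).continuous
  have hkey := integral_mul_deriv_eq_half_integral_sq
    (fun θ => (hasDerivAt_comp_arc (α := α) (β := β) σ θ (hdiff hx)).const_mul σ)
    (fun θ => hasDerivAt_comp_arc (α := α) (β := β) σ θ (hdiff hy)) (by fun_prop) (by fun_prop)
    fun θ hθ => by
      linear_combination σ * htan θ hθ - cos θ * pdy u (σ * (α + β * cos θ), β * sin θ) * hσ
  rw [← intervalIntegral.integral_const_mul]
  refine (intervalIntegral.integral_congr fun θ _ => ?_).trans
    (hkey.trans (congr_arg (· / 2) (intervalIntegral.integral_congr fun θ _ => ?_)))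
  · simp only [pdx_pdy_comm hu]
    linear_combination β * sin θ * (pdx u (σ * (α + β * cos θ), β * sin θ) *
      pdy (pdx u) (σ * (α + β * cos θ), β * sin θ)) * hσ
  · simp only [nderiv]
    ring

lemma setIntegral_hessian_det (hα : 0 < α) (hβ : 0 < β) (hu : ContDiff ℝ ∞ u)
    (hzero : ∀ p ∈ StadiumBoundary α β, u p = 0) :
    ∫ p in Stadium α β, (pdx (pdx u) p * pdy (pdy u) p - pdy (pdx u) p ^ 2) =
      bdryIntW α β (fun p n => nderiv u p n ^ 2) / (2 * β) := by
  have hdiff : Differentiable ℝ u := hu.differentiable (by simp)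
  have hx := (contDiff_pdx hu).continuous
  have hy := (contDiff_pdy hu).continuous
  have hxy := (contDiff_pdy (contDiff_pdx hu)).continuous
  have hyy := (contDiff_pdy (contDiff_pdy hu)).continuous
  have hflat : ∫ x in (-α)..α, ((0 : ℝ) * (pdx u (x, β) * pdy (pdy u) (x, β)) +
      1 * (-(pdx u (x, β) * pdy (pdx u) (x, β))) +
      ((0 : ℝ) * (pdx u (x, -β) * pdy (pdy u) (x, -β)) +
      (-1) * (-(pdx u (x, -β) * pdy (pdx u) (x, -β))))) = 0 := by
    refine intervalIntegral.integral_zero_ae (.of_forall fun x hx => ?_)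
    rw [uIoc_of_le (by linarith)] at hx
    rw [(IsOutwardNormal.top (Ioc_subset_Icc_self hx)).pdx_eq_nderiv_mul hα hβ hdiff hzero,
      (IsOutwardNormal.bottom (Ioc_subset_Icc_self hx)).pdx_eq_nderiv_mul hα hβ hdiff hzero]
    ring
  have hright := integral_arc_hessian_flux (α := α) (β := β) (one_pow 2) hu fun θ hθ => by
    simpa only [one_mul] using
      (IsOutwardNormal.right hθ).tangential_deriv_eq_zero hα hβ hdiff hzero
  have hleft := integral_arc_hessian_flux (α := α) (β := β) (σ := -1) (by norm_num) hu
    fun θ hθ => by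
      simpa only [neg_one_mul] using
        (IsOutwardNormal.left hθ).tangential_deriv_eq_zero hα hβ hdiff hzero
  simp only [one_mul, neg_one_mul] at hright hleft
  have hnormal : Continuous fun q : (ℝ × ℝ) × ℝ × ℝ => nderiv u q.1 q.2 := by
    unfold nderiv
    fun_prop
  rw [setIntegral_hessian_det_eq_bdryInt hα.le hβ.le hu, bdryInt, hflat, zero_add,
    intervalIntegral.integral_add (Continuous.intervalIntegrable (by fun_prop) _ _)
      (Continuous.intervalIntegrable (by fun_prop) _ _), mul_add, hright, hleft, bdryIntW,
    intervalIntegral.integral_add (Continuous.intervalIntegrable (by fun_prop) _ _)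
      (Continuous.intervalIntegrable (by fun_prop) _ _)]
  field_simp

lemma setIntegral_sq_pdx_pdx_add_sq_pdy_pdy_le (hα : 0 < α) (hβ : 0 < β) (hu : ContDiff ℝ ∞ u)
    (hzero : ∀ p ∈ StadiumBoundary α β, u p = 0) :
    ∫ p in Stadium α β, (pdx (pdx u) p ^ 2 + pdy (pdy u) p ^ 2) ≤
      ∫ p in Stadium α β, lap u p ^ 2 := by
  have hxx := (contDiff_pdx (contDiff_pdx hu)).continuous
  have hxy := (contDiff_pdy (contDiff_pdx hu)).continuous
  have hyy := (contDiff_pdy (contDiff_pdy hu)).continuous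
  have hdet : 0 ≤ ∫ p in Stadium α β, (pdx (pdx u) p * pdy (pdy u) p - pdy (pdx u) p ^ 2) := by
    rw [setIntegral_hessian_det hα hβ hu hzero]
    exact div_nonneg (bdryIntW_nonneg hβ.le fun _ _ => sq_nonneg _) (by positivity)
  have hlap := continuous_lap hu
  calc ∫ p in Stadium α β, (pdx (pdx u) p ^ 2 + pdy (pdy u) p ^ 2)
      ≤ ∫ p in Stadium α β,
          (lap u p ^ 2 - 2 * (pdx (pdx u) p * pdy (pdy u) p - pdy (pdx u) p ^ 2)) := by
        refine setIntegral_mono (integrableOn_stadium (by fun_prop))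
          (integrableOn_stadium (by fun_prop)) fun p => ?_
        simp only [lap]
        linarith [sq_nonneg (pdy (pdx u) p)]
    _ = (∫ p in Stadium α β, lap u p ^ 2) - 2 *
          ∫ p in Stadium α β, (pdx (pdx u) p * pdy (pdy u) p - pdy (pdx u) p ^ 2) := by
        rw [← integral_const_mul]
        exact integral_sub (integrableOn_stadium (by fun_prop)) (integrableOn_stadium (by fun_prop))
    _ ≤ ∫ p in Stadium α β, lap u p ^ 2 := by linarith

end Hessian

section Integrability

variable {K : Set (ℝ × ℝ)} {φ : ℝ → ℝ} {g : ℝ × ℝ → ℝ}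

lemma integrableOn_fst_mul (hK : IsCompact K) (hφ : LocallyIntegrable φ) (hg : Continuous g) :
    IntegrableOn (fun p => φ p.1 * g p) K := by
  have hfst := hK.image continuous_fst
  have hsnd := hK.image continuous_snd
  have : IsFiniteMeasure (volume.restrict (Prod.snd '' K)) := ⟨by
    simpa using hsnd.measure_lt_top⟩
  have hbox : IntegrableOn (fun p : ℝ × ℝ => φ p.1) ((Prod.fst '' K) ×ˢ (Prod.snd '' K)) := by
    rw [IntegrableOn, Measure.volume_eq_prod, ← Measure.prod_restrict]
    exact (hφ.integrableOn_isCompact hfst).comp_fst _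
  exact (hbox.mono_set subset_prod).mul_continuousOn hg.continuousOn hK

lemma intervalIntegrable_fst_mul (hφ : LocallyIntegrable φ) (hg : Continuous g) (y c d : ℝ) :
    IntervalIntegrable (fun x => φ x * g (x, y)) volume c d :=
  (hφ.integrableOn_isCompact isCompact_uIcc).intervalIntegrable.mul_continuousOn
    (Continuous.continuousOn (by fun_prop))

end Integrability

section Green

variable {α β : ℝ} {s : Set ℝ} {u v vx vy : ℝ × ℝ → ℝ}

lemma setIntegral_green (hα : 0 ≤ α) (hβ : 0 ≤ β) (hu : ContDiff ℝ ∞ u) (hv : Continuous v)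
    (hs : s.Countable) (hderivx : ∀ x y, x ∉ s → HasDerivAt (fun t => v (t, y)) (vx (x, y)) x)
    (hvx : IntegrableOn vx (Stadium α β))
    (hslice : ∀ y c d, IntervalIntegrable (fun x => vx (x, y)) volume c d) (hvy : Continuous vy)
    (hderivy : ∀ x y, HasDerivAt (fun t => v (x, t)) (vy (x, y)) y) :
    ∫ p in Stadium α β, (vx p * pdx u p + vy p * pdy u p - v p * lap u p) =
      bdryInt α β fun p n => v p * nderiv u p n := by
  have hdiff {v : ℝ × ℝ → ℝ} (hv : ContDiff ℝ ∞ v) : Differentiable ℝ v :=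
    hv.differentiable (by simp)
  have hx := contDiff_pdx hu
  have hy := contDiff_pdy hu
  have := hx.continuous
  have := hy.continuous
  have := (contDiff_pdx hx).continuous
  have := (contDiff_pdy hy).continuous
  have hdiv := setIntegral_divergence_eq_bdryInt hα hβ (F := fun p => v p * pdx u p)
    (G := fun p => v p * pdy u p) (f := fun p => vx p * pdx u p + v p * pdx (pdx u) p)
    (g := fun p => vy p * pdy u p + v p * pdy (pdy u) p) (by fun_prop) (by fun_prop) hs
    (fun x y hxs => (hderivx x y hxs).fun_mul (hasDerivAt_pdx (hdiff hx (x, y))))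
    ((hvx.mul_continuousOn hx.continuous.continuousOn (isCompact_stadium α β)).add
      (integrableOn_stadium (by fun_prop)))
    (fun y c d => ((hslice y c d).mul_continuousOn (Continuous.continuousOn (by fun_prop))).add
      (Continuous.intervalIntegrable (by fun_prop) c d)) (by fun_prop)
    fun x y => (hderivy x y).fun_mul (hasDerivAt_pdy (hdiff hy (x, y)))
  calc ∫ p in Stadium α β, (vx p * pdx u p + vy p * pdy u p - v p * lap u p)
      = ∫ p in Stadium α β, (vx p * pdx u p + v p * pdx (pdx u) p +
          (vy p * pdy u p + v p * pdy (pdy u) p)) := by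
        refine integral_congr_ae (.of_forall fun p => ?_)
        simp only [lap]
        ring
    _ = bdryInt α β fun p n => n.1 * (v p * pdx u p) + n.2 * (v p * pdy u p) := hdiv
    _ = bdryInt α β fun p n => v p * nderiv u p n := by
        congr with p n
        simp only [nderiv]
        ring

end Green

/-- The vector field `X = a(x) ∂_x + y m(x) ∂_y` is tangent to the boundary of the stadium. Its
coefficients have the derivatives `a'` and `m'` outside the exceptional set `s`; `m'` may jump. -/
structure IsTangentField (α β : ℝ) (a a' m m' : ℝ → ℝ) (s : Set ℝ) : Prop where
  countable : s.Countable
  continuous_a : Continuous a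
  continuous_a' : Continuous a'
  continuous_m : Continuous m
  locallyIntegrable_m' : LocallyIntegrable m'
  hasDerivAt_a : ∀ x ∉ s, HasDerivAt a (a' x) x
  hasDerivAt_m : ∀ x ∉ s, HasDerivAt m (m' x) x
  tangent : ∀ p n, IsOutwardNormal α β p n → n.1 * a p.1 + n.2 * (p.2 * m p.1) = 0

/-- The multiplier `X u + u / 2` of Rellich's identity, for the vector field
`X = a(x) ∂_x + y m(x) ∂_y`. -/
def rellichMultiplier (a m : ℝ → ℝ) (u : ℝ × ℝ → ℝ) (p : ℝ × ℝ) : ℝ :=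
  a p.1 * pdx u p + p.2 * m p.1 * pdy u p + u p / 2

/-- The Lagrangian density `|∇u|² - l u²` whose critical points solve `lap u = l u`. -/
def lagrangian (l : ℝ) (u : ℝ × ℝ → ℝ) (p : ℝ × ℝ) : ℝ :=
  pdx u p ^ 2 + pdy u p ^ 2 - l * u p ^ 2

/-- The quadratic form in `u`, `∇u` and `lap u - l u` that Rellich's identity integrates to zero
for the field `X = a(x) ∂_x + y m(x) ∂_y`. -/
def rellichDensity (a a' m m' : ℝ → ℝ) (l : ℝ) (u : ℝ × ℝ → ℝ) (p : ℝ × ℝ) : ℝ :=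
  m' p.1 * (p.2 * pdx u p * pdy u p) + (a' p.1 * pdx u p ^ 2 + m p.1 * pdy u p ^ 2 +
    (1 - a' p.1 - m p.1) / 2 * lagrangian l u p - rellichMultiplier a m u p * (lap u p - l * u p))

section Rellich

variable {α β l : ℝ} {a a' m m' : ℝ → ℝ} {u : ℝ × ℝ → ℝ} {s : Set ℝ}

lemma continuous_rellichMultiplier (ha : Continuous a) (hm : Continuous m)
    (hu : ContDiff ℝ ∞ u) : Continuous (rellichMultiplier a m u) := by
  have hx := (contDiff_pdx hu).continuous
  have hy := (contDiff_pdy hu).continuous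
  have huc := hu.continuous
  unfold rellichMultiplier
  fun_prop

lemma contDiff_lagrangian (hu : ContDiff ℝ ∞ u) : ContDiff ℝ ∞ (lagrangian l u) :=
  (((contDiff_pdx hu).pow 2).add ((contDiff_pdy hu).pow 2)).sub (contDiff_const.mul (hu.pow 2))

variable {x y : ℝ}

lemma hasDerivAt_rellichMultiplier_fst (hu : ContDiff ℝ ∞ u) (ha : HasDerivAt a (a' x) x)
    (hm : HasDerivAt m (m' x) x) :
    HasDerivAt (fun t => rellichMultiplier a m u (t, y))
      (a' x * pdx u (x, y) + a x * pdx (pdx u) (x, y) + (y * m' x * pdy u (x, y) +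
        y * m x * pdy (pdx u) (x, y)) + pdx u (x, y) / 2) x := by
  have hdiff {v : ℝ × ℝ → ℝ} (hv : ContDiff ℝ ∞ v) : DifferentiableAt ℝ v (x, y) :=
    hv.differentiable (by simp) _
  rw [← pdx_pdy_comm hu]
  exact ((ha.mul (hasDerivAt_pdx (hdiff (contDiff_pdx hu)))).add
    ((hm.const_mul y).mul (hasDerivAt_pdx (hdiff (contDiff_pdy hu))))).add
      ((hasDerivAt_pdx (hdiff hu)).div_const 2)

lemma hasDerivAt_rellichMultiplier_snd (hu : ContDiff ℝ ∞ u) :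
    HasDerivAt (fun t => rellichMultiplier a m u (x, t))
      (a x * pdy (pdx u) (x, y) + (m x * pdy u (x, y) + y * m x * pdy (pdy u) (x, y)) +
        pdy u (x, y) / 2) y := by
  have hdiff {v : ℝ × ℝ → ℝ} (hv : ContDiff ℝ ∞ v) : DifferentiableAt ℝ v (x, y) :=
    hv.differentiable (by simp) _
  have hym : HasDerivAt (fun t => t * m x) (m x) y := by
    simpa using (hasDerivAt_id' y).mul_const (m x)
  exact (((hasDerivAt_pdy (hdiff (contDiff_pdx hu))).const_mul (a x)).add
    (hym.mul (hasDerivAt_pdy (hdiff (contDiff_pdy hu))))).add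
      ((hasDerivAt_pdy (hdiff hu)).div_const 2)

lemma pdx_lagrangian (hu : ContDiff ℝ ∞ u) (p : ℝ × ℝ) :
    pdx (lagrangian l u) p =
      2 * (pdx u p * pdx (pdx u) p + pdy u p * pdy (pdx u) p - l * u p * pdx u p) := by
  have hdiff {v : ℝ × ℝ → ℝ} (hv : ContDiff ℝ ∞ v) : DifferentiableAt ℝ v p :=
    hv.differentiable (by simp) p
  rw [← pdx_pdy_comm hu]
  refine ((((hasDerivAt_pdx (hdiff (contDiff_pdx hu))).fun_pow 2).add
    ((hasDerivAt_pdx (hdiff (contDiff_pdy hu))).fun_pow 2)).sub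
      (((hasDerivAt_pdx (hdiff hu)).fun_pow 2).const_mul l)).deriv.trans ?_
  ring

lemma pdy_lagrangian (hu : ContDiff ℝ ∞ u) (p : ℝ × ℝ) :
    pdy (lagrangian l u) p =
      2 * (pdx u p * pdy (pdx u) p + pdy u p * pdy (pdy u) p - l * u p * pdy u p) := by
  have hdiff {v : ℝ × ℝ → ℝ} (hv : ContDiff ℝ ∞ v) : DifferentiableAt ℝ v p :=
    hv.differentiable (by simp) p
  refine ((((hasDerivAt_pdy (hdiff (contDiff_pdx hu))).fun_pow 2).add
    ((hasDerivAt_pdy (hdiff (contDiff_pdy hu))).fun_pow 2)).sub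
      (((hasDerivAt_pdy (hdiff hu)).fun_pow 2).const_mul l)).deriv.trans ?_
  ring

lemma IsTangentField.setIntegral_div_mul_eq_zero (hX : IsTangentField α β a a' m m' s)
    (hα : 0 ≤ α) (hβ : 0 ≤ β) {v : ℝ × ℝ → ℝ} (hv : ContDiff ℝ ∞ v) :
    ∫ p in Stadium α β, ((a' p.1 + m p.1) * v p + a p.1 * pdx v p + p.2 * m p.1 * pdy v p) = 0 := by
  have := hX.continuous_a
  have := hX.continuous_a'
  have := hX.continuous_m
  have := hv.continuous
  have := (contDiff_pdx hv).continuous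
  have := (contDiff_pdy hv).continuous
  have hdiff : Differentiable ℝ v := hv.differentiable (by simp)
  rw [← bdryInt_eq_zero (g := fun p n => n.1 * (a p.1 * v p) + n.2 * (p.2 * m p.1 * v p)) hα
      fun p n h => by linear_combination v p * hX.tangent p n h,
    ← setIntegral_divergence_eq_bdryInt hα hβ (F := fun p => a p.1 * v p)
      (G := fun p => p.2 * m p.1 * v p) (f := fun p => a' p.1 * v p + a p.1 * pdx v p)
      (g := fun p => 1 * m p.1 * v p + p.2 * m p.1 * pdy v p) (by fun_prop) (by fun_prop)
      hX.countable
      (fun x y hxs => (hX.hasDerivAt_a x hxs).fun_mul (hasDerivAt_pdx (hdiff (x, y))))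
      (integrableOn_stadium (by fun_prop))
      (fun y c d => Continuous.intervalIntegrable (by fun_prop) c d) (by fun_prop)
      fun x y => ((hasDerivAt_id' y).mul_const (m x)).fun_mul (hasDerivAt_pdy (hdiff (x, y)))]
  refine integral_congr_ae (.of_forall fun p => ?_)
  simp only
  ring

lemma IsOutwardNormal.rellichMultiplier_mul_nderiv_eq_zero (hα : 0 < α) (hβ : 0 < β)
    (hu : Differentiable ℝ u) (hzero : ∀ p ∈ StadiumBoundary α β, u p = 0) {p n : ℝ × ℝ}
    (h : IsOutwardNormal α β p n) (htangent : n.1 * a p.1 + n.2 * (p.2 * m p.1) = 0) :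
    rellichMultiplier a m u p * nderiv u p n = 0 := by
  rw [rellichMultiplier, hzero p (h.mem_stadiumBoundary hα.le hβ.le),
    h.pdx_eq_nderiv_mul hα hβ hu hzero, h.pdy_eq_nderiv_mul hα hβ hu hzero]
  linear_combination nderiv u p n ^ 2 * htangent

lemma IsTangentField.setIntegral_green_rellichMultiplier (hX : IsTangentField α β a a' m m' s)
    (hα : 0 < α) (hβ : 0 < β) (hu : ContDiff ℝ ∞ u)
    (hzero : ∀ p ∈ StadiumBoundary α β, u p = 0) :
    ∫ p in Stadium α β, (m' p.1 * (p.2 * pdx u p * pdy u p) + ((a' p.1 * pdx u p +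
        a p.1 * pdx (pdx u) p + p.2 * m p.1 * pdy (pdx u) p + pdx u p / 2) * pdx u p +
      (a p.1 * pdy (pdx u) p + (m p.1 * pdy u p + p.2 * m p.1 * pdy (pdy u) p) + pdy u p / 2) *
        pdy u p - rellichMultiplier a m u p * lap u p)) = 0 := by
  have := hX.continuous_a
  have := hX.continuous_a'
  have := hX.continuous_m
  have hx := contDiff_pdx hu
  have hy := contDiff_pdy hu
  have := hx.continuous
  have := hy.continuous
  have := (contDiff_pdx hx).continuous
  have := (contDiff_pdy hx).continuous
  have := (contDiff_pdy hy).continuous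
  refine (integral_congr_ae (.of_forall fun p => ?_)).trans
    ((setIntegral_green hα.le hβ.le hu
      (continuous_rellichMultiplier hX.continuous_a hX.continuous_m hu) hX.countable
      (vx := fun p => m' p.1 * (p.2 * pdy u p) + (a' p.1 * pdx u p + a p.1 * pdx (pdx u) p +
        p.2 * m p.1 * pdy (pdx u) p + pdx u p / 2))
      (fun x y hxs => (hasDerivAt_rellichMultiplier_fst hu (hX.hasDerivAt_a x hxs)
        (hX.hasDerivAt_m x hxs)).congr_deriv ?_)
      ((integrableOn_fst_mul (isCompact_stadium α β) hX.locallyIntegrable_m' (by fun_prop)).add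
        (integrableOn_stadium (by fun_prop)))
      (fun y c d => (intervalIntegrable_fst_mul hX.locallyIntegrable_m'
        (g := fun p => p.2 * pdy u p) (by fun_prop) y c d).add
          (Continuous.intervalIntegrable (by fun_prop) c d))
      (vy := fun p => a p.1 * pdy (pdx u) p + (m p.1 * pdy u p + p.2 * m p.1 * pdy (pdy u) p) +
        pdy u p / 2) (by fun_prop) fun x y => hasDerivAt_rellichMultiplier_snd hu).trans
    (bdryInt_eq_zero hα.le fun p n h => h.rellichMultiplier_mul_nderiv_eq_zero hα hβ
      (hu.differentiable (by simp)) hzero (hX.tangent p n h)))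
  · ring
  · ring

lemma IsTangentField.integrableOn_rellichDensity (hX : IsTangentField α β a a' m m' s)
    (hu : ContDiff ℝ ∞ u) : IntegrableOn (rellichDensity a a' m m' l u) (Stadium α β) := by
  have := hX.continuous_a'
  have := hX.continuous_m
  have := hu.continuous
  have := (contDiff_pdx hu).continuous
  have := (contDiff_pdy hu).continuous
  have := continuous_lap hu
  have := continuous_rellichMultiplier hX.continuous_a hX.continuous_m hu
  have := (contDiff_lagrangian (l := l) hu).continuous
  exact (integrableOn_fst_mul (isCompact_stadium α β) hX.locallyIntegrable_m' (by fun_prop)).add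
    (integrableOn_stadium (by fun_prop))

-- Since `∇u` is normal to the boundary and `X` is tangent to it, no boundary term appears.
lemma IsTangentField.setIntegral_rellichDensity_eq_zero (hX : IsTangentField α β a a' m m' s)
    (hα : 0 < α) (hβ : 0 < β) (hu : ContDiff ℝ ∞ u)
    (hzero : ∀ p ∈ StadiumBoundary α β, u p = 0) :
    ∫ p in Stadium α β, rellichDensity a a' m m' l u p = 0 := by
  have hlag := contDiff_lagrangian (l := l) hu
  have hgreen := hX.setIntegral_green_rellichMultiplier hα hβ hu hzero
  have hdiv := hX.setIntegral_div_mul_eq_zero hα.le hβ.le hlag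
  have := hX.continuous_a
  have := hX.continuous_a'
  have := hX.continuous_m
  have hx := contDiff_pdx hu
  have hy := contDiff_pdy hu
  have := hu.continuous
  have := hx.continuous
  have := hy.continuous
  have := (contDiff_pdx hx).continuous
  have := (contDiff_pdy hx).continuous
  have := (contDiff_pdy hy).continuous
  have := continuous_lap hu
  have := continuous_rellichMultiplier hX.continuous_a hX.continuous_m hu
  have := hlag.continuous
  have := (contDiff_pdx hlag).continuous
  have := (contDiff_pdy hlag).continuous
  refine Eq.trans ?_ ((congr_arg₂ (fun s t => s - 1 / 2 * t) hgreen hdiv).trans (by norm_num))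
  rw [← integral_const_mul, ← integral_sub]
  · refine integral_congr_ae (.of_forall fun p => ?_)
    simp only [pdx_lagrangian hu, pdy_lagrangian hu]
    simp only [rellichDensity, lagrangian, rellichMultiplier]
    ring
  · exact (integrableOn_fst_mul (isCompact_stadium α β) hX.locallyIntegrable_m' (by fun_prop)).add
      (integrableOn_stadium (by fun_prop))
  · exact integrableOn_stadium (by fun_prop)

end Rellich

/-- The coefficient `a(x)` of the field `a(x) ∂_x + y m(x) ∂_y` used in Rellich's identity. With
`τ = wingOffset α x / β` it is chosen as `x (1 - τ ^ 4)`, so that on the rectangle the field is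
`x ∂_x`, and `1 - a'` vanishes to second order at the rectangle. -/
def fieldFst (α β x : ℝ) : ℝ := x * (1 - (wingOffset α x / β) ^ 4)

/-- The derivative of `fieldFst`. -/
def fieldFstDeriv (α β x : ℝ) : ℝ :=
  1 - (wingOffset α x / β) ^ 4 - 4 * x * (wingOffset α x / β) ^ 3 / β

/-- The coefficient `m(x)` of the field `a(x) ∂_x + y m(x) ∂_y`: the value that makes the field
tangent to the semicircles, where `y ^ 2 / β ^ 2 = 1 - τ ^ 2`. -/
def fieldSnd (α β x : ℝ) : ℝ :=
  -(x * (wingOffset α x / β) * (1 + (wingOffset α x / β) ^ 2) / β)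

/-- The derivative of `fieldSnd` away from the jump points `x = ± α`. -/
def fieldSndDeriv (α β x : ℝ) : ℝ :=
  -((wingOffset α x / β + (wingOffset α x / β) ^ 3 +
    x / β * ((Icc (-α) α)ᶜ.indicator 1 x + 3 * (wingOffset α x / β) ^ 2)) / β)

section Field

variable {α β x y : ℝ}

lemma hasDerivAt_wingOffset_div (hα : 0 ≤ α) (hx : x ∉ ({α, -α} : Set ℝ)) :
    HasDerivAt (fun t => wingOffset α t / β) ((Icc (-α) α)ᶜ.indicator 1 x / β) x :=
  (hasDerivAt_wingOffset hα hx).div_const β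

lemma hasDerivAt_fieldFst (hα : 0 ≤ α) (hx : x ∉ ({α, -α} : Set ℝ)) :
    HasDerivAt (fieldFst α β) (fieldFstDeriv α β x) x := by
  refine ((hasDerivAt_id' x).mul
    (((hasDerivAt_wingOffset_div (β := β) hα hx).fun_pow 4).const_sub 1)).congr_deriv ?_
  simp only [fieldFstDeriv]
  linear_combination
    (-4 * x * wingOffset α x ^ 2 / β ^ 4) * indicator_mul_wingOffset (α := α) (x := x)

lemma hasDerivAt_fieldSnd (hα : 0 ≤ α) (hx : x ∉ ({α, -α} : Set ℝ)) :
    HasDerivAt (fieldSnd α β) (fieldSndDeriv α β x) x := by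
  have hτ := hasDerivAt_wingOffset_div (β := β) hα hx
  refine ((((hasDerivAt_id' x).fun_mul hτ).fun_mul ((hτ.fun_pow 2).const_add 1)).div_const
    β).fun_neg.congr_deriv ?_
  simp only [fieldSndDeriv]
  linear_combination (-3 * x * wingOffset α x / β ^ 4) * indicator_mul_wingOffset (α := α) (x := x)

lemma locallyIntegrable_fieldSndDeriv : LocallyIntegrable (fieldSndDeriv α β) := by
  have hc := continuous_wingOffset (α := α)
  have hjump : LocallyIntegrable ((Icc (-α) α)ᶜ.indicator fun x => -(x / β / β)) :=
    (Continuous.locallyIntegrable (by fun_prop)).indicator measurableSet_Icc.compl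
  have hrest : Continuous fun x => -((wingOffset α x / β + (wingOffset α x / β) ^ 3 +
      x / β * (3 * (wingOffset α x / β) ^ 2)) / β) := by fun_prop
  refine (hjump.add hrest.locallyIntegrable).congr (.of_forall fun x => ?_)
  simp only [Pi.add_apply, fieldSndDeriv, indicator]
  split_ifs
  · simp only [Pi.one_apply]
    ring
  · ring

lemma fieldFst_mul_add_fieldSnd_mul_eq_zero {p n : ℝ × ℝ} (hα : 0 ≤ α) (hβ : 0 < β)
    (h : IsOutwardNormal α β p n) :
    n.1 * fieldFst α β p.1 + n.2 * (p.2 * fieldSnd α β p.1) = 0 := by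
  have harc {θ : ℝ} (hθ : θ ∈ Icc (-(π / 2)) (π / 2)) : 0 ≤ β * cos θ :=
    mul_nonneg hβ.le (cos_nonneg_of_mem_Icc hθ)
  cases h with
  | top hx => simp [fieldSnd, wingOffset_of_abs_le (abs_le.2 hx)]
  | bottom hx => simp [fieldSnd, wingOffset_of_abs_le (abs_le.2 hx)]
  | @right θ hθ =>
    simp only [fieldFst, fieldSnd]
    rw [wingOffset_of_le hα (by linarith [harc hθ]), add_sub_cancel_left,
      mul_div_cancel_left₀ _ hβ.ne']
    field_simp
    linear_combination (-cos θ * (α + β * cos θ) * (1 + cos θ ^ 2)) * sin_sq_add_cos_sq θ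
  | @left θ hθ =>
    have hτ : (-(α + β * cos θ) + α) / β = -cos θ := by
      field_simp
      ring
    simp only [fieldFst, fieldSnd]
    rw [wingOffset_of_le_neg hα (by linarith [harc hθ]), hτ]
    field_simp
    linear_combination (-cos θ * (α + β * cos θ) * (1 + cos θ ^ 2)) * sin_sq_add_cos_sq θ

lemma isTangentField_field (hα : 0 ≤ α) (hβ : 0 < β) :
    IsTangentField α β (fieldFst α β) (fieldFstDeriv α β) (fieldSnd α β) (fieldSndDeriv α β)
      {α, -α} where
  countable := (countable_singleton _).insert _
  continuous_a := by
    have := continuous_wingOffset (α := α)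
    unfold fieldFst
    fun_prop
  continuous_a' := by
    have := continuous_wingOffset (α := α)
    unfold fieldFstDeriv
    fun_prop
  continuous_m := by
    have := continuous_wingOffset (α := α)
    unfold fieldSnd
    fun_prop
  locallyIntegrable_m' := locallyIntegrable_fieldSndDeriv
  hasDerivAt_a _ hx := hasDerivAt_fieldFst hα hx
  hasDerivAt_m _ hx := hasDerivAt_fieldSnd hα hx
  tangent _ _ h := fieldFst_mul_add_fieldSnd_mul_eq_zero hα hβ h

lemma abs_fst_le_of_mem_stadium (hα : 0 ≤ α) (hβ : 0 ≤ β) (h : (x, y) ∈ Stadium α β) :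
    |x| ≤ α + β :=
  abs_le.2 ((mem_stadium_iff_snd hα hβ).1 h).1

lemma abs_snd_le_of_mem_stadium (hα : 0 ≤ α) (hβ : 0 ≤ β) (h : (x, y) ∈ Stadium α β) :
    |y| ≤ β :=
  abs_le.2 ((mem_stadium_iff_fst hα hβ).1 h).1

lemma abs_wingOffset_div_le_one (hα : 0 ≤ α) (hβ : 0 < β) (hx : |x| ≤ α + β) :
    |wingOffset α x / β| ≤ 1 := by
  rw [abs_div, abs_of_pos hβ, div_le_one hβ, abs_wingOffset_le_iff hα hβ.le]
  exact hx

lemma abs_fieldFst_le (hα : 0 ≤ α) (hβ : 0 < β) (hx : |x| ≤ α + β) :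
    |fieldFst α β x| ≤ α + β := by
  have hτ : (wingOffset α x / β) ^ 4 ≤ 1 := by
    rw [← (show Even 4 by decide).pow_abs]
    exact pow_le_one₀ (abs_nonneg _) (abs_wingOffset_div_le_one hα hβ hx)
  have hfactor : |1 - (wingOffset α x / β) ^ 4| ≤ 1 :=
    abs_le.2 ⟨by linarith, by linarith [show 0 ≤ (wingOffset α x / β) ^ 4 by positivity]⟩
  rw [fieldFst, abs_mul]
  exact (mul_le_of_le_one_right (abs_nonneg x) hfactor).trans hx

lemma mul_wingOffset_div_nonneg (hα : 0 ≤ α) (hβ : 0 ≤ β) : 0 ≤ x * (wingOffset α x / β) := by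
  rw [← mul_div_assoc, mul_wingOffset hα]
  positivity

lemma mul_wingOffset_div_le (hα : 0 ≤ α) (hβ : 0 < β) (hx : |x| ≤ α + β) :
    x * (wingOffset α x / β) ≤ α + β := by
  refine (le_abs_self _).trans ?_
  rw [abs_mul]
  exact (mul_le_of_le_one_right (abs_nonneg x) (abs_wingOffset_div_le_one hα hβ hx)).trans hx

lemma fieldFstDeriv_le_one (hα : 0 ≤ α) (hβ : 0 < β) : fieldFstDeriv α β x ≤ 1 := by
  have hnonneg : 0 ≤ 4 * (wingOffset α x / β) ^ 2 / β * (x * (wingOffset α x / β)) :=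
    mul_nonneg (by positivity) (mul_wingOffset_div_nonneg hα hβ.le)
  calc fieldFstDeriv α β x = 1 - ((wingOffset α x / β) ^ 4 +
        4 * (wingOffset α x / β) ^ 2 / β * (x * (wingOffset α x / β))) := by
        rw [fieldFstDeriv]
        ring
    _ ≤ 1 := sub_le_self 1 (by positivity)

lemma one_sub_fieldFstDeriv_le (hα : 0 ≤ α) (hβ : 0 < β) (hx : |x| ≤ α + β) :
    1 - fieldFstDeriv α β x ≤ 5 * ((α + β) / β) * (wingOffset α x / β) ^ 2 := by
  have hτ : (wingOffset α x / β) ^ 2 ≤ 1 :=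
    (sq_le_one_iff_abs_le_one _).2 (abs_wingOffset_div_le_one hα hβ hx)
  have hκ : 1 ≤ (α + β) / β := (one_le_div hβ).2 (by linarith)
  have hxτ : x * (wingOffset α x / β) / β ≤ (α + β) / β := by
    gcongr
    exact mul_wingOffset_div_le hα hβ hx
  rw [fieldFstDeriv]
  calc 1 - (1 - (wingOffset α x / β) ^ 4 - 4 * x * (wingOffset α x / β) ^ 3 / β)
      = ((wingOffset α x / β) ^ 2 + 4 * (x * (wingOffset α x / β) / β)) *
          (wingOffset α x / β) ^ 2 := by ring
    _ ≤ 5 * ((α + β) / β) * (wingOffset α x / β) ^ 2 := by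
        gcongr
        linarith

lemma fieldSnd_nonpos (hα : 0 ≤ α) (hβ : 0 < β) : fieldSnd α β x ≤ 0 := by
  have := mul_wingOffset_div_nonneg (x := x) hα hβ.le
  rw [fieldSnd, neg_nonpos]
  positivity

lemma neg_fieldSnd_le (hα : 0 ≤ α) (hβ : 0 < β) (hx : |x| ≤ α + β) :
    -fieldSnd α β x ≤ 2 * ((α + β) / β) := by
  have hτ : (wingOffset α x / β) ^ 2 ≤ 1 :=
    (sq_le_one_iff_abs_le_one _).2 (abs_wingOffset_div_le_one hα hβ hx)
  rw [fieldSnd, neg_neg]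
  calc x * (wingOffset α x / β) * (1 + (wingOffset α x / β) ^ 2) / β
      ≤ (α + β) * (1 + 1) / β := by
        gcongr
        exact mul_wingOffset_div_le hα hβ hx
    _ = 2 * ((α + β) / β) := by ring

lemma abs_snd_mul_fieldSnd_le (hα : 0 ≤ α) (hβ : 0 < β) (h : (x, y) ∈ Stadium α β) :
    |y * fieldSnd α β x| ≤ 2 * (α + β) := by
  have hx := abs_fst_le_of_mem_stadium hα hβ.le h
  rw [abs_mul, abs_of_nonpos (fieldSnd_nonpos hα hβ)]
  calc |y| * -fieldSnd α β x ≤ β * (2 * ((α + β) / β)) :=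
        mul_le_mul (abs_snd_le_of_mem_stadium hα hβ.le h) (neg_fieldSnd_le hα hβ hx)
          (neg_nonneg.2 (fieldSnd_nonpos hα hβ)) hβ.le
    _ = 2 * (α + β) := by field_simp

lemma abs_snd_mul_fieldSndDeriv_le (hα : 0 ≤ α) (hβ : 0 < β) (h : (x, y) ∈ Stadium α β) :
    |y * fieldSndDeriv α β x| ≤ 6 * ((α + β) / β) := by
  have hx := abs_fst_le_of_mem_stadium hα hβ.le h
  have hτ := abs_wingOffset_div_le_one hα hβ hx
  have hκ : 1 ≤ (α + β) / β := (one_le_div hβ).2 (by linarith)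
  have hχ : |(Icc (-α) α)ᶜ.indicator (1 : ℝ → ℝ) x| ≤ 1 := by
    rw [indicator]
    split_ifs <;> simp
  have hnum : |wingOffset α x / β + (wingOffset α x / β) ^ 3 +
      x / β * ((Icc (-α) α)ᶜ.indicator 1 x + 3 * (wingOffset α x / β) ^ 2)| ≤
      6 * ((α + β) / β) := by
    calc _ ≤ |wingOffset α x / β| + |wingOffset α x / β| ^ 3 + |x| / β *
          (|(Icc (-α) α)ᶜ.indicator (1 : ℝ → ℝ) x| + 3 * |wingOffset α x / β| ^ 2) := by
          refine (abs_add_le _ _).trans (add_le_add ((abs_add_le _ _).trans_eq ?_) ?_)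
          · rw [abs_pow]
          · rw [abs_mul, abs_div, abs_of_pos hβ]
            gcongr
            exact (abs_add_le _ _).trans_eq (by simp)
      _ ≤ 1 + 1 ^ 3 + (α + β) / β * (1 + 3 * 1 ^ 2) := by gcongr
      _ ≤ 6 * ((α + β) / β) := by linarith
  rw [fieldSndDeriv, mul_neg, abs_neg, mul_div_assoc', mul_comm, mul_div_assoc, abs_mul,
    abs_div, abs_of_pos hβ]
  exact (mul_le_of_le_one_right (abs_nonneg _)
    ((div_le_one hβ).2 (abs_snd_le_of_mem_stadium hα hβ.le h))).trans hnum

end Field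

lemma mul_mul_le_of_abs_le {a c ε : ℝ} (hε : 0 < ε) (ha : |a| ≤ c) (p f : ℝ) :
    a * p * f ≤ ε * p ^ 2 + c ^ 2 / (4 * ε) * f ^ 2 := by
  have ha2 : a ^ 2 ≤ c ^ 2 := sq_le_sq.2 (ha.trans (le_abs_self c))
  calc a * p * f ≤ a * p * f + ε * (p - a / (2 * ε) * f) ^ 2 :=
        le_add_of_nonneg_right (by positivity)
    _ = ε * p ^ 2 + a ^ 2 / (4 * ε) * f ^ 2 := by
        field_simp
        ring
    _ ≤ ε * p ^ 2 + c ^ 2 / (4 * ε) * f ^ 2 := by gcongr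

section Poincare

variable {α β : ℝ} {F f u : ℝ × ℝ → ℝ} {s : Set ℝ}

lemma setIntegral_deriv_fst_eq_zero (hα : 0 ≤ α) (hβ : 0 ≤ β) (hF : Continuous F)
    (hzero : ∀ p ∈ StadiumBoundary α β, F p = 0) (hs : s.Countable) (hf : Continuous f)
    (hderiv : ∀ x y, x ∉ s → HasDerivAt (fun t => F (t, y)) (f (x, y)) x) :
    ∫ p in Stadium α β, f p = 0 := by
  rw [setIntegral_deriv_fst_eq_bdryInt hα hβ hF hs hderiv (integrableOn_stadium hf)
    fun y c d => Continuous.intervalIntegrable (by fun_prop) c d]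
  exact bdryInt_eq_zero hα fun p n h => by rw [hzero p (h.mem_stadiumBoundary hα hβ), mul_zero]

lemma setIntegral_sq_le_setIntegral_sq_pdx (hα : 0 ≤ α) (hβ : 0 ≤ β) (hu : ContDiff ℝ ∞ u)
    (hzero : ∀ p ∈ StadiumBoundary α β, u p = 0) :
    ∫ p in Stadium α β, u p ^ 2 ≤ 4 * (α + β) ^ 2 * ∫ p in Stadium α β, pdx u p ^ 2 := by
  have huc := hu.continuous
  have hx := (contDiff_pdx hu).continuous
  have hflux : ∫ p in Stadium α β, (1 * u p ^ 2 + p.1 * (2 * u p * pdx u p)) = 0 :=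
    setIntegral_deriv_fst_eq_zero hα hβ (F := fun p => p.1 * u p ^ 2) (by fun_prop)
      (fun p hp => by simp [hzero p hp]) countable_empty (by fun_prop) fun x y _ =>
        (hasDerivAt_id' x).fun_mul (by
          simpa using (hasDerivAt_pdx (hu.differentiable (by simp) (x, y))).fun_pow 2)
  calc ∫ p in Stadium α β, u p ^ 2
      ≤ ∫ p in Stadium α β, (2 * (1 * u p ^ 2 + p.1 * (2 * u p * pdx u p)) +
          4 * (α + β) ^ 2 * pdx u p ^ 2) := by
        refine setIntegral_mono_on (integrableOn_stadium (by fun_prop))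
          (integrableOn_stadium (by fun_prop)) (isCompact_stadium α β).measurableSet fun p hp => ?_
        have hle : p.1 ^ 2 * pdx u p ^ 2 ≤ (α + β) ^ 2 * pdx u p ^ 2 := by
          gcongr ?_ * _
          exact sq_le_sq.2 ((abs_fst_le_of_mem_stadium hα hβ hp).trans (le_abs_self _))
        linarith [sq_nonneg (u p + 2 * (p.1 * pdx u p))]
    _ = 4 * (α + β) ^ 2 * ∫ p in Stadium α β, pdx u p ^ 2 := by
        rw [integral_add (integrableOn_stadium (by fun_prop)) (integrableOn_stadium (by fun_prop)),
          integral_const_mul, integral_const_mul, hflux, mul_zero, zero_add]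

end Poincare

section RellichEstimate

lemma mul_add_half_mul_le {L a p v f : ℝ} (hL : 0 < L) (ha : |a| ≤ L) :
    (a * p + v / 2) * f ≤ p ^ 2 / 4 + 2 * L ^ 2 * f ^ 2 + v ^ 2 / (16 * L ^ 2) := by
  have hp := mul_mul_le_of_abs_le (show (0 : ℝ) < 1 / 4 by norm_num) ha p f
  have hv : v / 2 * f ≤ v ^ 2 / (16 * L ^ 2) + L ^ 2 * f ^ 2 := by
    have := mul_mul_le_of_abs_le (show (0 : ℝ) < 1 / (16 * L ^ 2) by positivity)
      (abs_of_pos one_half_pos).le v f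
    field_simp at this ⊢
    linarith
  linarith

lemma sq_le_rellich_wings {L κ t l a a' m b b' p q v f : ℝ} (hL : 0 < L) (hκ : 1 ≤ κ) (hl : 0 ≤ l)
    (ha : |a| ≤ L) (ha'_le : a' ≤ 1) (ha' : 1 - a' ≤ 5 * κ * t ^ 2) (ht : t ^ 2 ≤ 1)
    (hm_nonpos : m ≤ 0) (hm : -m ≤ 2 * κ) (hb : |b| ≤ 2 * L) (hb' : |b'| ≤ 6 * κ) :
    p ^ 2 ≤ b' * p * q + (a' * p ^ 2 + m * q ^ 2 + (1 - a' - m) / 2 * (p ^ 2 + q ^ 2 - l * v ^ 2) -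
      (a * p + b * q + v / 2) * f) + (p ^ 2 / 2 + 3 * L ^ 2 * f ^ 2 + v ^ 2 / (16 * L ^ 2)) +
      (37 * κ ^ 2 + 1) * (q ^ 2 + t ^ 2 * p ^ 2 + l * v ^ 2) := by
  have hκ2 : κ ≤ κ ^ 2 := le_self_pow₀ hκ two_ne_zero
  have hpq := mul_mul_le_of_abs_le (show (0 : ℝ) < 1 / 4 by norm_num)
    ((abs_neg b').trans_le hb') p q
  have hqf := mul_mul_le_of_abs_le one_pos hb q f
  have hpf := mul_add_half_mul_le (p := p) (v := v) (f := f) hL ha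
  have hp : (1 - a' + m) / 2 * p ^ 2 ≤ 37 * κ ^ 2 * (t ^ 2 * p ^ 2) := by
    rw [← mul_assoc]
    gcongr
    nlinarith [mul_nonneg (sub_nonneg.2 hκ2) (sq_nonneg t)]
  have hq : (-(1 - a') - m) / 2 * q ^ 2 ≤ κ ^ 2 * q ^ 2 := by
    gcongr
    linarith
  have hv : (1 - a' - m) / 2 * (l * v ^ 2) ≤ 37 * κ ^ 2 * (l * v ^ 2) := by
    gcongr
    nlinarith
  linarith [mul_nonneg (sq_nonneg t) (sq_nonneg p), mul_nonneg hl (sq_nonneg v)]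

end RellichEstimate

section Rellich

variable {α β l : ℝ} {u : ℝ × ℝ → ℝ}

lemma rellichDensity_field_of_abs_le {p : ℝ × ℝ} (hp : |p.1| ≤ α) :
    rellichDensity (fieldFst α β) (fieldFstDeriv α β) (fieldSnd α β) (fieldSndDeriv α β) l u p =
      pdx u p ^ 2 - (p.1 * pdx u p + u p / 2) * (lap u p - l * u p) := by
  have hχ : (Icc (-α) α)ᶜ.indicator (1 : ℝ → ℝ) p.1 = 0 :=
    indicator_of_notMem (by simpa using abs_le.1 hp) _
  simp [rellichDensity, rellichMultiplier, fieldFst, fieldFstDeriv, fieldSnd, fieldSndDeriv,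
    wingOffset_of_abs_le hp, hχ]

lemma sq_pdx_le_rellichDensity_of_notMem_wings (hα : 0 ≤ α) (hβ : 0 < β) {p : ℝ × ℝ}
    (hp : p ∈ Stadium α β) (hpW : p ∉ Wings α β) :
    pdx u p ^ 2 ≤ rellichDensity (fieldFst α β) (fieldFstDeriv α β) (fieldSnd α β)
      (fieldSndDeriv α β) l u p + (pdx u p ^ 2 / 2 + 3 * (α + β) ^ 2 * (lap u p - l * u p) ^ 2 +
        u p ^ 2 / (16 * (α + β) ^ 2)) := by
  have hx : |p.1| < α := by
    by_contra! h
    exact hpW ((mem_wings_iff hα).2 ⟨h, (mem_stadium_iff hα hβ.le).1 hp⟩)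
  have hle := mul_add_half_mul_le (p := pdx u p) (v := u p) (f := lap u p - l * u p)
    (show 0 < α + β by linarith) (show |p.1| ≤ α + β by linarith)
  rw [rellichDensity_field_of_abs_le hx.le]
  linarith [sq_nonneg (pdx u p), sq_nonneg ((α + β) * (lap u p - l * u p))]

lemma sq_pdx_le_rellichDensity_of_mem_stadium (hα : 0 ≤ α) (hβ : 0 < β) (hl : 0 ≤ l) {p : ℝ × ℝ}
    (hp : p ∈ Stadium α β) :
    pdx u p ^ 2 ≤ rellichDensity (fieldFst α β) (fieldFstDeriv α β) (fieldSnd α β)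
      (fieldSndDeriv α β) l u p + (pdx u p ^ 2 / 2 + 3 * (α + β) ^ 2 * (lap u p - l * u p) ^ 2 +
        u p ^ 2 / (16 * (α + β) ^ 2)) + (37 * ((α + β) / β) ^ 2 + 1) *
        (pdy u p ^ 2 + (wingOffset α p.1 / β) ^ 2 * pdx u p ^ 2 + l * u p ^ 2) := by
  have hx := abs_fst_le_of_mem_stadium hα hβ.le hp
  have hle := sq_le_rellich_wings (p := pdx u p) (q := pdy u p) (v := u p)
    (f := lap u p - l * u p) (show 0 < α + β by linarith) ((one_le_div hβ).2 (by linarith)) hl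
    (abs_fieldFst_le hα hβ hx) (fieldFstDeriv_le_one hα hβ) (one_sub_fieldFstDeriv_le hα hβ hx)
    ((sq_le_one_iff_abs_le_one _).2 (abs_wingOffset_div_le_one hα hβ hx)) (fieldSnd_nonpos hα hβ)
    (neg_fieldSnd_le hα hβ hx) (abs_snd_mul_fieldSnd_le hα hβ hp)
    (abs_snd_mul_fieldSndDeriv_le hα hβ hp)
  simp only [rellichDensity, rellichMultiplier, lagrangian]
  linarith

lemma setIntegral_sq_pdx_le (hα : 0 < α) (hβ : 0 < β) (hl : 0 ≤ l) (hu : ContDiff ℝ ∞ u)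
    (hzero : ∀ p ∈ StadiumBoundary α β, u p = 0) :
    ∫ p in Stadium α β, pdx u p ^ 2 ≤
      (∫ p in Stadium α β, pdx u p ^ 2) / 2 +
      3 * (α + β) ^ 2 * (∫ p in Stadium α β, (lap u p - l * u p) ^ 2) +
      (∫ p in Stadium α β, u p ^ 2) / (16 * (α + β) ^ 2) +
      (37 * ((α + β) / β) ^ 2 + 1) * ∫ p in Wings α β,
        (pdy u p ^ 2 + (wingOffset α p.1 / β) ^ 2 * pdx u p ^ 2 + l * u p ^ 2) := by
  have hX := isTangentField_field hα.le hβ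
  have huc := hu.continuous
  have hx := (contDiff_pdx hu).continuous
  have hy := (contDiff_pdy hu).continuous
  have hlap := continuous_lap hu
  have hoff := continuous_wingOffset (α := α)
  have hW := (isCompact_wings α β).measurableSet
  have hcont : IntegrableOn (fun p => pdx u p ^ 2 / 2 +
      3 * (α + β) ^ 2 * (lap u p - l * u p) ^ 2 + u p ^ 2 / (16 * (α + β) ^ 2)) (Stadium α β) :=
    integrableOn_stadium (by fun_prop)
  have hwings : IntegrableOn ((Wings α β).indicator fun p => (37 * ((α + β) / β) ^ 2 + 1) *
      (pdy u p ^ 2 + (wingOffset α p.1 / β) ^ 2 * pdx u p ^ 2 + l * u p ^ 2)) (Stadium α β) :=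
    (integrableOn_stadium (by fun_prop)).indicator hW
  have hdensity := hX.integrableOn_rellichDensity (l := l) hu
  refine (setIntegral_mono_on (integrableOn_stadium (by fun_prop)) ((hdensity.add hcont).add hwings)
    (isCompact_stadium α β).measurableSet fun p hp => ?_).trans_eq ?_
  · by_cases hpW : p ∈ Wings α β
    · simpa only [Pi.add_apply, indicator_of_mem hpW] using
        sq_pdx_le_rellichDensity_of_mem_stadium hα.le hβ hl hp
    · simpa only [Pi.add_apply, indicator_of_notMem hpW, add_zero] using
        sq_pdx_le_rellichDensity_of_notMem_wings hα.le hβ hp hpW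
  · rw [integral_add' (hdensity.add hcont) hwings, integral_add' hdensity hcont,
      hX.setIntegral_rellichDensity_eq_zero hα hβ hu hzero, zero_add, setIntegral_indicator hW,
      inter_eq_right.2 wings_subset_stadium, integral_const_mul,
      integral_add (integrableOn_stadium (by fun_prop)) (integrableOn_stadium (by fun_prop)),
      integral_add (integrableOn_stadium (by fun_prop)) (integrableOn_stadium (by fun_prop)),
      integral_const_mul, integral_div, integral_div]

lemma setIntegral_sq_le_wings_energy (hα : 0 < α) (hβ : 0 < β) (hl : 0 ≤ l)
    (hu : ContDiff ℝ ∞ u) (hzero : ∀ p ∈ StadiumBoundary α β, u p = 0) :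
    ∫ p in Stadium α β, u p ^ 2 ≤
      16 * (α + β) ^ 2 * (3 * (α + β) ^ 2 * (∫ p in Stadium α β, (lap u p - l * u p) ^ 2) +
      (37 * ((α + β) / β) ^ 2 + 1) * ∫ p in Wings α β,
        (pdy u p ^ 2 + (wingOffset α p.1 / β) ^ 2 * pdx u p ^ 2 + l * u p ^ 2)) := by
  have hpoincare := setIntegral_sq_le_setIntegral_sq_pdx hα.le hβ.le hu hzero
  have habsorb : (∫ p in Stadium α β, u p ^ 2) / (16 * (α + β) ^ 2) ≤
      (∫ p in Stadium α β, pdx u p ^ 2) / 4 := by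
    rw [div_le_iff₀ (by positivity)]
    linarith
  calc ∫ p in Stadium α β, u p ^ 2
      ≤ 4 * (α + β) ^ 2 * ∫ p in Stadium α β, pdx u p ^ 2 := hpoincare
    _ ≤ 4 * (α + β) ^ 2 * (4 * (3 * (α + β) ^ 2 *
          (∫ p in Stadium α β, (lap u p - l * u p) ^ 2) +
          (37 * ((α + β) / β) ^ 2 + 1) * ∫ p in Wings α β,
            (pdy u p ^ 2 + (wingOffset α p.1 / β) ^ 2 * pdx u p ^ 2 + l * u p ^ 2))) := by
        gcongr
        linarith [setIntegral_sq_pdx_le hα hβ hl hu hzero]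
    _ = _ := by ring

end Rellich

section Caccioppoli

variable {α β : ℝ} {u : ℝ × ℝ → ℝ}

lemma mem_stadiumBoundary_of_snd_eq_halfChord (hα : 0 ≤ α) (hβ : 0 ≤ β) {x y : ℝ}
    (hx : |x| ∈ Icc α (α + β)) (hy : |y| = halfChord β (wingOffset α x)) :
    (x, y) ∈ StadiumBoundary α β := by
  have hτ : |wingOffset α x| ≤ β := (abs_wingOffset_le_iff hα hβ).2 hx.2
  have hchord : y ^ 2 = β ^ 2 - wingOffset α x ^ 2 := by
    rw [← sq_abs y, hy, halfChord, sq_sqrt (sub_nonneg.2 (sq_le_sq.2 (hτ.trans (le_abs_self β))))]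
  have hoff : (|x| - α) ^ 2 = wingOffset α x ^ 2 := by
    rw [← sq_abs (wingOffset α x), abs_wingOffset hα, max_eq_left (sub_nonneg.2 hx.1)]
  exact .inr ⟨by linear_combination hoff + hchord, hx.1⟩

lemma setIntegral_wings_sq_pdy_add (hα : 0 ≤ α) (hβ : 0 ≤ β) (hu : ContDiff ℝ ∞ u)
    (hzero : ∀ p ∈ StadiumBoundary α β, u p = 0) :
    ∫ p in Wings α β, (pdy u p * pdy u p + u p * pdy (pdy u) p) = 0 := by
  have huc := hu.continuous
  have hy := contDiff_pdy hu
  have := hy.continuous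
  have := (contDiff_pdy hy).continuous
  have hdiff {v : ℝ × ℝ → ℝ} (hv : ContDiff ℝ ∞ v) : Differentiable ℝ v :=
    hv.differentiable (by simp)
  rw [setIntegral_eq_integral_integral_snd (isCompact_wings α β).measurableSet
    (continuous_abs.measurable measurableSet_Icc)
    (fun x y => mem_wings_iff_snd hα hβ) (fun x _ => neg_le_self halfChord_nonneg)
    (Continuous.continuousOn (by fun_prop) |>.integrableOn_compact (isCompact_wings α β))]
  refine setIntegral_eq_zero_of_forall_eq_zero fun x hx => ?_
  rw [intervalIntegral.integral_eq_sub_of_hasDerivAt (f := fun y => u (x, y) * pdy u (x, y))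
    (fun y _ => (hasDerivAt_pdy (hdiff hu (x, y))).fun_mul (hasDerivAt_pdy (hdiff hy (x, y))))
    (Continuous.intervalIntegrable (by fun_prop) _ _)]
  simp [hzero _ (mem_stadiumBoundary_of_snd_eq_halfChord hα hβ hx (abs_of_nonneg halfChord_nonneg)),
    hzero _ (mem_stadiumBoundary_of_snd_eq_halfChord hα hβ hx
      ((abs_neg _).trans (abs_of_nonneg halfChord_nonneg)))]

lemma setIntegral_wings_sq_pdx_add (hα : 0 ≤ α) (hβ : 0 ≤ β) (hu : ContDiff ℝ ∞ u)
    (hzero : ∀ p ∈ StadiumBoundary α β, u p = 0) :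
    ∫ p in Wings α β, (2 * (wingOffset α p.1 / β) / β * (u p * pdx u p) +
      (wingOffset α p.1 / β) ^ 2 * (pdx u p * pdx u p + u p * pdx (pdx u) p)) = 0 := by
  have hoff := continuous_wingOffset (α := α)
  have huc := hu.continuous
  have hx := contDiff_pdx hu
  have := hx.continuous
  have := (contDiff_pdx hx).continuous
  have hdiff {v : ℝ × ℝ → ℝ} (hv : ContDiff ℝ ∞ v) : Differentiable ℝ v :=
    hv.differentiable (by simp)
  rw [← setIntegral_deriv_fst_eq_zero hα hβ (s := {α, -α})
    (F := fun p => (wingOffset α p.1 / β) ^ 2 * (u p * pdx u p)) (by fun_prop)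
    (fun p hp => by simp [hzero p hp]) ((countable_singleton _).insert _)
    (f := fun p => 2 * (wingOffset α p.1 / β) / β * (u p * pdx u p) +
      (wingOffset α p.1 / β) ^ 2 * (pdx u p * pdx u p + u p * pdx (pdx u) p)) (by fun_prop)
    fun x y hxs => ?_]
  · refine (setIntegral_eq_of_subset_of_forall_sdiff_eq_zero
      (isCompact_stadium α β).measurableSet wings_subset_stadium fun p hp => ?_).symm
    have hx : |p.1| ≤ α := by
      by_contra! h
      exact hp.2 ((mem_wings_iff hα).2 ⟨h.le, (mem_stadium_iff hα hβ).1 hp.1⟩)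
    simp [wingOffset_of_abs_le hx]
  · refine (((hasDerivAt_wingOffset_div hα hxs).fun_pow 2).fun_mul ((hasDerivAt_pdx
      (hdiff hu (x, y))).fun_mul (hasDerivAt_pdx (hdiff hx (x, y))))).congr_deriv ?_
    linear_combination 2 / β ^ 2 * (u (x, y) * pdx u (x, y)) *
      indicator_mul_wingOffset (α := α) (x := x)

lemma sq_add_sq_le_caccioppoli {β ε t p q v w z : ℝ} (hε : 0 < ε) (ht : t ^ 2 ≤ 1) :
    q ^ 2 + t ^ 2 * p ^ 2 ≤ (q * q + v * z) +
      2 * (2 * t / β * (v * p) + t ^ 2 * (p * p + v * w)) + ε * (w ^ 2 + z ^ 2) +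
      (4 / β ^ 2 + 2 / ε) * v ^ 2 := by
  have hcross : -(4 * t / β * (v * p)) ≤ t ^ 2 * p ^ 2 + 4 / β ^ 2 * v ^ 2 := by
    linarith [sq_nonneg (t * p + 2 / β * v), show (t * p + 2 / β * v) ^ 2 =
      t ^ 2 * p ^ 2 + 4 * t / β * (v * p) + 4 / β ^ 2 * v ^ 2 by ring]
  have hz := mul_mul_le_of_abs_le hε (show |(-1 : ℝ)| ≤ 1 by simp) z v
  have hw := mul_mul_le_of_abs_le hε (show |-2 * t ^ 2| ≤ 2 by
    rw [abs_mul, abs_of_nonneg (sq_nonneg t)]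
    norm_num1
    linarith) w v
  have hconst : (1 ^ 2 / (4 * ε) + 2 ^ 2 / (4 * ε)) * v ^ 2 ≤ 2 / ε * v ^ 2 := by
    gcongr
    field_simp
    norm_num
  linear_combination hcross + hz + hw + hconst

lemma setIntegral_wings_energy_le_hessian (hα : 0 ≤ α) (hβ : 0 < β) (hu : ContDiff ℝ ∞ u)
    (hzero : ∀ p ∈ StadiumBoundary α β, u p = 0) {ε : ℝ} (hε : 0 < ε) :
    ∫ p in Wings α β, (pdy u p ^ 2 + (wingOffset α p.1 / β) ^ 2 * pdx u p ^ 2) ≤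
      ε * (∫ p in Stadium α β, (pdx (pdx u) p ^ 2 + pdy (pdy u) p ^ 2)) +
      (4 / β ^ 2 + 2 / ε) * ∫ p in Wings α β, u p ^ 2 := by
  have hoff := continuous_wingOffset (α := α)
  have huc := hu.continuous
  have hx := (contDiff_pdx hu).continuous
  have hy := (contDiff_pdy hu).continuous
  have hxx := (contDiff_pdx (contDiff_pdx hu)).continuous
  have hyy := (contDiff_pdy (contDiff_pdy hu)).continuous
  have hint {g : ℝ × ℝ → ℝ} (hg : Continuous g) : IntegrableOn g (Wings α β) :=
    hg.continuousOn.integrableOn_compact (isCompact_wings α β)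
  have hmono : ∫ p in Wings α β, (pdx (pdx u) p ^ 2 + pdy (pdy u) p ^ 2) ≤
      ∫ p in Stadium α β, (pdx (pdx u) p ^ 2 + pdy (pdy u) p ^ 2) :=
    setIntegral_mono_set (integrableOn_stadium (by fun_prop))
      (.of_forall fun p => by positivity) wings_subset_stadium.eventuallyLE
  calc ∫ p in Wings α β, (pdy u p ^ 2 + (wingOffset α p.1 / β) ^ 2 * pdx u p ^ 2)
      ≤ ∫ p in Wings α β, ((pdy u p * pdy u p + u p * pdy (pdy u) p) +
          2 * (2 * (wingOffset α p.1 / β) / β * (u p * pdx u p) +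
            (wingOffset α p.1 / β) ^ 2 * (pdx u p * pdx u p + u p * pdx (pdx u) p)) +
          ε * (pdx (pdx u) p ^ 2 + pdy (pdy u) p ^ 2) + (4 / β ^ 2 + 2 / ε) * u p ^ 2) :=
        setIntegral_mono_on (hint (by fun_prop)) (hint (by fun_prop))
          (isCompact_wings α β).measurableSet fun p hp =>
            sq_add_sq_le_caccioppoli hε ((sq_le_one_iff_abs_le_one _).2
              (abs_wingOffset_div_le_one hα hβ
                (abs_fst_le_of_mem_stadium hα hβ.le (wings_subset_stadium hp))))
    _ = ε * (∫ p in Wings α β, (pdx (pdx u) p ^ 2 + pdy (pdy u) p ^ 2)) +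
          (4 / β ^ 2 + 2 / ε) * ∫ p in Wings α β, u p ^ 2 := by
        rw [integral_add (hint (by fun_prop)) (hint (by fun_prop)),
          integral_add (hint (by fun_prop)) (hint (by fun_prop)),
          integral_add (hint (by fun_prop)) (hint (by fun_prop)), integral_const_mul,
          integral_const_mul, integral_const_mul, setIntegral_wings_sq_pdy_add hα hβ.le hu hzero,
          setIntegral_wings_sq_pdx_add hα hβ.le hu hzero, mul_zero, add_zero, zero_add]
    _ ≤ _ := by gcongr

end Caccioppoli

section Observability

variable {α β l : ℝ} {u : ℝ × ℝ → ℝ}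

lemma setIntegral_hessian_le (hα : 0 < α) (hβ : 0 < β) (hu : ContDiff ℝ ∞ u)
    (hzero : ∀ p ∈ StadiumBoundary α β, u p = 0) :
    ∫ p in Stadium α β, (pdx (pdx u) p ^ 2 + pdy (pdy u) p ^ 2) ≤
      2 * (∫ p in Stadium α β, (lap u p - l * u p) ^ 2) +
        2 * l ^ 2 * ∫ p in Stadium α β, u p ^ 2 := by
  have huc := hu.continuous
  have hlap := continuous_lap hu
  calc ∫ p in Stadium α β, (pdx (pdx u) p ^ 2 + pdy (pdy u) p ^ 2)
      ≤ ∫ p in Stadium α β, lap u p ^ 2 := setIntegral_sq_pdx_pdx_add_sq_pdy_pdy_le hα hβ hu hzero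
    _ ≤ ∫ p in Stadium α β, (2 * (lap u p - l * u p) ^ 2 + 2 * l ^ 2 * u p ^ 2) := by
        refine setIntegral_mono (integrableOn_stadium (by fun_prop))
          (integrableOn_stadium (by fun_prop)) fun p => ?_
        linarith [sq_nonneg (lap u p - 2 * (l * u p))]
    _ = _ := by
        rw [integral_add (integrableOn_stadium (by fun_prop)) (integrableOn_stadium (by fun_prop)),
          integral_const_mul, integral_const_mul]

lemma exists_setIntegral_sq_le_wings_energy (hα : 0 < α) (hβ : 0 < β) :
    ∃ C > 0, ∀ l ≥ 0, ∀ u : ℝ × ℝ → ℝ, ContDiff ℝ ∞ u → (∀ p ∈ StadiumBoundary α β, u p = 0) →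
      ∫ p in Stadium α β, u p ^ 2 ≤ C * ((∫ p in Stadium α β, (lap u p - l * u p) ^ 2) +
        (∫ p in Wings α β, (pdy u p ^ 2 + (wingOffset α p.1 / β) ^ 2 * pdx u p ^ 2)) +
        l * ∫ p in Wings α β, u p ^ 2) := by
  refine ⟨16 * (α + β) ^ 2 * (3 * (α + β) ^ 2 + (37 * ((α + β) / β) ^ 2 + 1)), by positivity,
    fun l hl u hu hzero => ?_⟩
  have hoff := continuous_wingOffset (α := α)
  have huc := hu.continuous
  have hx := (contDiff_pdx hu).continuous
  have hy := (contDiff_pdy hu).continuous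
  have hint {g : ℝ × ℝ → ℝ} (hg : Continuous g) : IntegrableOn g (Wings α β) :=
    hg.continuousOn.integrableOn_compact (isCompact_wings α β)
  refine (setIntegral_sq_le_wings_energy hα hβ hl hu hzero).trans ?_
  rw [integral_add (hint (by fun_prop)) (hint (by fun_prop)), integral_const_mul,
    add_assoc (∫ p in Stadium α β, (lap u p - l * u p) ^ 2)]
  set F := ∫ p in Stadium α β, (lap u p - l * u p) ^ 2
  set E := (∫ p in Wings α β, (pdy u p ^ 2 + (wingOffset α p.1 / β) ^ 2 * pdx u p ^ 2)) +
    l * ∫ p in Wings α β, u p ^ 2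
  have hF : 0 ≤ F := integral_nonneg fun p => by positivity
  have hE : 0 ≤ E := add_nonneg (integral_nonneg fun p => by positivity)
    (mul_nonneg hl (integral_nonneg fun p => by positivity))
  rw [mul_assoc (16 * (α + β) ^ 2), add_mul (3 * (α + β) ^ 2)]
  gcongr <;> linarith

-- With `ε = 1 / (4 C l ^ 2)` the Hessian is small enough to be absorbed.
lemma sq_le_of_wings_energy_le {C N F E D H b : ℝ} (hC : 0 < C) (hF : 0 ≤ F) (hD : 0 ≤ D)
    (hb : 0 ≤ b) (hl : 1 ≤ l) (hN : N ≤ C * (F + E + l * D)) (hH : H ≤ 2 * F + 2 * l ^ 2 * N)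
    (hE : ∀ ε > 0, E ≤ ε * H + (b + 2 / ε) * D) :
    N / 2 ≤ (C + 1 / 2 + C * (b + 8 * C + 1)) * (F + l ^ 2 * D) := by
  have hl2 : 1 ≤ l ^ 2 := one_le_pow₀ hl
  have hll : l ≤ l ^ 2 := le_self_pow₀ hl two_ne_zero
  have hlD : l * D ≤ l ^ 2 * D := by gcongr
  have hbD : b * D ≤ b * (l ^ 2 * D) := by
    gcongr
    exact le_mul_of_one_le_left hD hl2
  have hFl : F / l ^ 2 ≤ F := div_le_self hF hl2
  have henergy : C * E ≤ F / 2 + N / 2 + C * ((b + 8 * C) * (l ^ 2 * D)) := by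
    calc C * E ≤ C * (1 / (4 * C * l ^ 2) * H + (b + 2 / (1 / (4 * C * l ^ 2))) * D) := by
          gcongr
          exact hE _ (by positivity)
      _ ≤ C * (1 / (4 * C * l ^ 2) * (2 * F + 2 * l ^ 2 * N) +
            (b + 2 / (1 / (4 * C * l ^ 2))) * D) := by gcongr
      _ = F / l ^ 2 / 2 + N / 2 + C * (b * D + 8 * C * (l ^ 2 * D)) := by
          field_simp
          ring
      _ ≤ F / 2 + N / 2 + C * ((b + 8 * C) * (l ^ 2 * D)) := by
          rw [add_mul]
          gcongr
  have hCD : 0 ≤ C * (b + 8 * C + 1) * F := by positivity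
  have hCF : 0 ≤ (C + 1 / 2) * (l ^ 2 * D) := by positivity
  have hClD := mul_le_mul_of_nonneg_left hlD hC.le
  linarith

lemma exists_setIntegral_sq_le (hα : 0 < α) (hβ : 0 < β) :
    ∃ C > 0, ∀ l ≥ 1, ∀ u : ℝ × ℝ → ℝ, ContDiff ℝ ∞ u → (∀ p ∈ StadiumBoundary α β, u p = 0) →
      C * ∫ p in Stadium α β, u p ^ 2 ≤ (∫ p in Stadium α β, (lap u p - l * u p) ^ 2) +
        l ^ 2 * ∫ p in Wings α β, u p ^ 2 := by
  obtain ⟨C, hC, hle⟩ := exists_setIntegral_sq_le_wings_energy hα hβ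
  refine ⟨1 / (2 * (C + 1 / 2 + C * (4 / β ^ 2 + 8 * C + 1))), by positivity,
    fun l hl u hu hzero => ?_⟩
  have := sq_le_of_wings_energy_le hC (integral_nonneg fun p => by positivity)
    (integral_nonneg fun p => by positivity) (by positivity) hl
    (hle l (zero_le_one.trans hl) u hu hzero) (setIntegral_hessian_le hα hβ hu hzero)
    fun ε hε => setIntegral_wings_energy_le_hessian hα.le hβ hu hzero hε
  rw [one_div_mul_eq_div, div_le_iff₀ (by positivity)]
  linarith

lemma QMDatum.exists_contDiff_extension (hα : 0 ≤ α) (hβ : 0 ≤ β) (d : QMDatum α β) :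
    ∃ U : ℝ × ℝ → ℝ, ContDiff ℝ ∞ U ∧ (∀ p ∈ StadiumBoundary α β, U p = 0) ∧
      ∀ p ∈ Stadium α β, U p = d.u p ∧ lap U p - d.lam ^ 2 * U p = d.f p := by
  obtain ⟨V, hV, hSV, hu⟩ := d.smooth
  obtain ⟨U, hU, hUu⟩ := exists_contDiff_eventuallyEq (isCompact_stadium α β) hV hSV hu
  have heq {p : ℝ × ℝ} (hp : p ∈ Stadium α β) : U p = d.u p := (hUu p hp).self_of_nhds
  refine ⟨U, hU, fun p hp => ?_, fun p hp => ⟨heq hp, ?_⟩⟩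
  · rw [heq (stadiumBoundary_subset_stadium hα hβ hp), d.dirichlet p hp]
  · rw [lap_congr (hUu p hp), heq hp, d.eqn p hp]

end Observability

theorem stmt1_general (α β : ℝ) (hα : 0 < α) (hβ : 0 < β) :
    ∃ C > 0, ∀ d : QMDatum α β, 1 ≤ d.lam →
      C * ∫ p in Stadium α β, d.u p ^ 2 ≤
        (∫ p in Stadium α β, d.f p ^ 2) + d.lam ^ 4 * ∫ p in Wings α β, d.u p ^ 2 := by
  obtain ⟨C, hC, hle⟩ := exists_setIntegral_sq_le hα hβ
  refine ⟨C, hC, fun d hlam => ?_⟩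
  obtain ⟨U, hU, hzero, heq⟩ := d.exists_contDiff_extension hα.le hβ.le
  have hS := (isCompact_stadium α β).measurableSet
  have hW := (isCompact_wings α β).measurableSet
  have hmain := hle (d.lam ^ 2) (one_le_pow₀ hlam) U hU hzero
  rwa [setIntegral_congr_fun hS fun p hp => congr_arg (· ^ 2) (heq p hp).1,
    setIntegral_congr_fun hS fun p hp => congr_arg (· ^ 2) (heq p hp).2,
    setIntegral_congr_fun hW fun p hp => congr_arg (· ^ 2) (heq p (wings_subset_stadium hp)).1,
    ← pow_mul] at hmain

/-- There are `C > 0` and `λ₀ > 0` depending only on `α, β` such that every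
real Dirichlet quasimode datum with `λ ≥ λ₀` and `‖u‖_{L²(S)} = 1` satisfies
`‖f‖²_{L²(S)} + λ⁸ ‖u‖²_{L²(W)} ≥ C`. -/
theorem stmt1 (α β : ℝ) (hα : 0 < α) (hβ : 0 < β) :
    ∃ C > 0, ∃ lam₀ > 0, ∀ d : QMDatum α β, d.lam ≥ lam₀ →
      (∫ p in Stadium α β, (d.u p) ^ 2) = 1 →
      (∫ p in Stadium α β, (d.f p) ^ 2) +
        d.lam ^ 8 * (∫ p in Wings α β, (d.u p) ^ 2) ≥ C := by
  obtain ⟨C, hC, hle⟩ := stmt1_general α β hα hβ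
  refine ⟨C, hC, 1, one_pos, fun d hlam hnorm => ?_⟩
  have hmain := hle d hlam
  rw [hnorm, mul_one] at hmain
  exact hmain.trans (by gcongr; norm_num)
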